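/- arXiv:2510.17506 — 3 statements merged into one kernel-verified Lean document; each statement's English description precedes it below -/
import Mathlib

section
/- Let 0 < a < c and b > 0, and let T be the planar map T(x,y) = ((1 − (a + A(x,y))y²)x, (1 + (b + B(x))x² − (c + C(y))y²)y) with A, B, C real-analytic near the origin and vanishing at the origin, and set κ := √(b/(c−a)). Then there exists δ > 0 such that for all initial points (x₀, y₀) with 0 < x₀ < δ and 0 < y₀ < δ and every ε with 0 < ε < κ, there exists τ ∈ ℕ such that the iterates (x_t, y_t) := T^t(x₀, y₀) satisfy, for all t ≥ τ: x_τ/√(1 + 3a(κ+ε)²x_τ²(t−τ)) ≤ x_t ≤ x_τ/√(1 + 2a(κ−ε)²x_τ²(t−τ)) and (κ − ε/2)x_t ≤ y_t ≤ (κ + ε/2)x_t. In particular there exist constants 0 < c₁ ≤ c₂ and T₀ ∈ ℕ such that c₁ t^{−1/2} ≤ x_t ≤ c₂ t^{−1/2} and c₁ t^{−1/2} ≤ y_t ≤ c₂ t^{−1/2} for all t ≥ T₀. -/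
/-!
In the slope `r = y / x` one step of the map is the convex combination `r' = (1 - s) r + s k`, where
`k = √(β / (γ - α))` is the slope at which `x` and `y` shrink by the same factor and
`s = (γ - α) y (y + k x) / (1 - α y²)`. Close to the origin `s ∈ [0, 1]` and `k` is close to `κ`, so
slopes stay in an interval; this makes a small box invariant and forces the orbit to the origin.
Then `k → κ`. Since `x → 0`, the product of the factors `1 - α y²` vanishes, so `∑ y²` and with it
`∑ s` diverge, and the slopes converge to `κ`. Finally the increments of `1 / x²` converge to
`2 a κ²`, which yields both the two-sided bounds and, by Cesàro, the rate `t ^ (-1/2)`.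
-/

open Filter Topology

section Relaxation

variable {E : Type*}

/-- The sequence `v` is obtained by moving, at time `t`, a fraction `s t ∈ [0, 1]` of the way
towards the moving target `e t`. -/
structure IsRelaxation [AddCommGroup E] [Module ℝ E] (s : ℕ → ℝ) (e v : ℕ → E) : Prop where
  nonneg : ∀ t, 0 ≤ s t
  le_one : ∀ t, s t ≤ 1
  succ : ∀ t, v (t + 1) = (1 - s t) • v t + s t • e t

namespace IsRelaxation

lemma comp_add_right [AddCommGroup E] [Module ℝ E] {s : ℕ → ℝ} {e v : ℕ → E}
    (h : IsRelaxation s e v) (N : ℕ) :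
    IsRelaxation (fun t ↦ s (t + N)) (fun t ↦ e (t + N)) (fun t ↦ v (t + N)) where
  nonneg t := h.nonneg _
  le_one t := h.le_one _
  succ t := by rw [add_right_comm, h.succ]

lemma mem_of_convex [AddCommGroup E] [Module ℝ E] {s : ℕ → ℝ} {e v : ℕ → E}
    (h : IsRelaxation s e v) {K : Set E} (hK : Convex ℝ K) (h₀ : v 0 ∈ K) (he : ∀ t, e t ∈ K)
    (t : ℕ) : v t ∈ K := by
  induction t with
  | zero => exact h₀
  | succ t ih =>
    rw [h.succ]
    exact hK ih (he t) (sub_nonneg.2 (h.le_one t)) (h.nonneg t) (by ring)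

variable [NormedAddCommGroup E] [NormedSpace ℝ E] {s : ℕ → ℝ} {e v : ℕ → E} {l : E}

lemma norm_sub_le (h : IsRelaxation s e v) {ε : ℝ} (he : ∀ t, ‖e t - l‖ ≤ ε) (t : ℕ) :
    ‖v t - l‖ ≤ ε + Real.exp (-∑ i ∈ Finset.range t, s i) * ‖v 0 - l‖ := by
  induction t with
  | zero => simpa using (norm_nonneg _).trans (he 0)
  | succ t ih =>
    set P := Real.exp (-∑ i ∈ Finset.range t, s i) * ‖v 0 - l‖ with hP
    have hs : 0 ≤ 1 - s t := sub_nonneg.2 (h.le_one t)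
    have hexp : 1 - s t ≤ Real.exp (-s t) := Real.one_sub_le_exp_neg _
    calc ‖v (t + 1) - l‖ = ‖(1 - s t) • (v t - l) + s t • (e t - l)‖ := by
          rw [h.succ]; congr 1; module
      _ ≤ (1 - s t) * ‖v t - l‖ + s t * ‖e t - l‖ := by
          refine (norm_add_le _ _).trans_eq ?_
          rw [norm_smul_of_nonneg hs, norm_smul_of_nonneg (h.nonneg t)]
      _ ≤ (1 - s t) * (ε + P) + s t * ε := by
          gcongr
          exacts [h.nonneg t, he t]
      _ = ε + (1 - s t) * P := by ring
      _ ≤ ε + Real.exp (-s t) * P := by gcongr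
      _ = ε + Real.exp (-∑ i ∈ Finset.range (t + 1), s i) * ‖v 0 - l‖ := by
          rw [Finset.sum_range_succ, neg_add_rev, Real.exp_add, hP, mul_assoc]

theorem tendsto (h : IsRelaxation s e v) (hs : ¬Summable s) (he : Tendsto e atTop (𝓝 l)) :
    Tendsto v atTop (𝓝 l) := by
  rw [Metric.tendsto_nhds]
  intro ε hε
  obtain ⟨N, hN⟩ := eventually_atTop.1 (Metric.tendsto_nhds.1 he (ε / 2) (half_pos hε))
  have hsum : Tendsto (fun t ↦ ∑ i ∈ Finset.range t, s (i + N)) atTop atTop :=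
    (not_summable_iff_tendsto_nat_atTop_of_nonneg fun t ↦ h.nonneg _).1
      (mt (summable_nat_add_iff N).1 hs)
  have hdecay : Tendsto (fun t ↦ Real.exp (-∑ i ∈ Finset.range t, s (i + N)) * ‖v (0 + N) - l‖)
      atTop (𝓝 0) := by
    simpa using (Real.tendsto_exp_neg_atTop_nhds_zero.comp hsum).mul_const ‖v (0 + N) - l‖
  have hbound := (h.comp_add_right N).norm_sub_le (l := l) (ε := ε / 2) fun t ↦ by
    simpa [dist_eq_norm] using (hN (t + N) (by simp)).le
  have hshift : ∀ᶠ t in atTop, dist (v (t + N)) l < ε := by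
    filter_upwards [hdecay.eventually_lt_const (half_pos hε)] with t ht
    rw [dist_eq_norm]
    linarith [hbound t]
  rw [← map_add_atTop_eq_nat N]
  exact hshift

end IsRelaxation

end Relaxation

lemma not_summable_of_tendsto_zero {x w : ℕ → ℝ} (hx : ∀ t, x t ≠ 0)
    (hsucc : ∀ t, x (t + 1) = (1 - w t) * x t) (hlim : Tendsto x atTop (𝓝 0)) :
    ¬Summable w := by
  intro hw
  have hprod (t : ℕ) : x t = (∏ i ∈ Finset.range t, (1 + -w i)) * x 0 := by
    induction t with
    | zero => simp
    | succ t ih => rw [hsucc, Finset.prod_range_succ, ih]; ring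
  have hfactor (t : ℕ) : 1 + -w t ≠ 0 := fun h ↦
    hx (t + 1) (by rw [hsucc, sub_eq_add_neg, h, zero_mul])
  have hnorm : Summable fun t ↦ ‖-w t‖ := by simpa using hw.abs
  have hlim' : Tendsto x atTop (𝓝 ((∏' i, (1 + -w i)) * x 0)) :=
    ((multipliable_one_add_of_summable hnorm).tendsto_prod_tprod_nat.mul_const (x 0)).congr
      fun t ↦ (hprod t).symm
  exact mul_ne_zero (tprod_one_add_ne_zero_of_summable hfactor hnorm) (hx 0)
    (tendsto_nhds_unique hlim' hlim)

lemma tendsto_zero_of_succ_le_sub_pow {x : ℕ → ℝ} {m : ℝ} {n : ℕ} (hm : 0 < m)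
    (hx : ∀ t, 0 ≤ x t) (hsucc : ∀ t, x (t + 1) ≤ x t - m * x t ^ n) :
    Tendsto x atTop (𝓝 0) := by
  have hanti : Antitone x := antitone_nat_of_succ_le fun t ↦
    (hsucc t).trans (sub_le_self _ (mul_nonneg hm.le (pow_nonneg (hx t) n)))
  obtain ⟨L, hL⟩ : ∃ L, Tendsto x atTop (𝓝 L) :=
    ⟨_, tendsto_atTop_ciInf hanti ⟨0, Set.forall_mem_range.2 hx⟩⟩
  have hpow : L ≤ L - m * L ^ n :=
    le_of_tendsto_of_tendsto' (hL.comp (tendsto_add_atTop_nat 1))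
      (hL.sub ((hL.pow n).const_mul m)) hsucc
  have hL₀ : L ^ n = 0 := by
    have : 0 ≤ L ^ n := pow_nonneg (ge_of_tendsto' hL hx) n
    nlinarith
  rwa [eq_zero_of_pow_eq_zero hL₀] at hL

section Increments

variable {f : ℕ → ℝ} {L m : ℝ}

lemma eventually_add_mul_le_of_tendsto_sub
    (h : Tendsto (fun t ↦ f (t + 1) - f t) atTop (𝓝 L)) (hm : m < L) :
    ∀ᶠ τ : ℕ in atTop, ∀ t : ℕ, τ ≤ t → f τ + m * ((t : ℝ) - τ) ≤ f t := by
  filter_upwards [eventually_forall_ge_atTop.2 (h.eventually_const_le hm)] with τ hτ t ht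
  induction t, ht using Nat.le_induction with
  | base => simp
  | succ t ht ih =>
    push_cast
    linarith [hτ t ht]

lemma eventually_le_add_mul_of_tendsto_sub
    (h : Tendsto (fun t ↦ f (t + 1) - f t) atTop (𝓝 L)) (hm : L < m) :
    ∀ᶠ τ : ℕ in atTop, ∀ t : ℕ, τ ≤ t → f t ≤ f τ + m * ((t : ℝ) - τ) := by
  have hneg : Tendsto (fun t ↦ -f (t + 1) - -f t) atTop (𝓝 (-L)) :=
    h.neg.congr fun t ↦ by ring
  filter_upwards [eventually_add_mul_le_of_tendsto_sub (f := fun t ↦ -f t) hneg (neg_lt_neg hm)]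
    with τ hτ t ht
  linarith [hτ t ht]

lemma tendsto_inv_mul_of_tendsto_sub (h : Tendsto (fun t ↦ f (t + 1) - f t) atTop (𝓝 L)) :
    Tendsto (fun t : ℕ ↦ (t : ℝ)⁻¹ * f t) atTop (𝓝 L) := by
  have hmean := h.cesaro.add (tendsto_inv_atTop_nhds_zero_nat.mul_const (f 0))
  rw [zero_mul, add_zero] at hmean
  exact hmean.congr fun t ↦ by rw [Finset.sum_range_sub]; ring

end Increments

section InverseSquare

lemma div_sqrt_one_add_mul_sq {u : ℝ} (hu : 0 < u) (m s : ℝ) :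
    u / √(1 + m * u ^ 2 * s) = (√((u ^ 2)⁻¹ + m * s))⁻¹ := by
  have hfactor : 1 + m * u ^ 2 * s = u ^ 2 * ((u ^ 2)⁻¹ + m * s) := by field_simp
  rw [hfactor, Real.sqrt_mul (sq_nonneg u), Real.sqrt_sq hu.le, ← div_div, div_self hu.ne', one_div]

lemma inv_sqrt_inv_sq {v : ℝ} (hv : 0 < v) : (√((v ^ 2)⁻¹))⁻¹ = v := by
  rw [Real.sqrt_inv, inv_inv, Real.sqrt_sq hv.le]

lemma div_sqrt_le_of_inv_sq_le {u v m s : ℝ} (hu : 0 < u) (hv : 0 < v)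
    (h : (v ^ 2)⁻¹ ≤ (u ^ 2)⁻¹ + m * s) : u / √(1 + m * u ^ 2 * s) ≤ v := by
  rw [div_sqrt_one_add_mul_sq hu]
  calc (√((u ^ 2)⁻¹ + m * s))⁻¹ ≤ (√((v ^ 2)⁻¹))⁻¹ := by gcongr
    _ = v := inv_sqrt_inv_sq hv

lemma le_div_sqrt_of_le_inv_sq {u v m s : ℝ} (hu : 0 < u) (hv : 0 < v) (hms : 0 ≤ m * s)
    (h : (u ^ 2)⁻¹ + m * s ≤ (v ^ 2)⁻¹) : v ≤ u / √(1 + m * u ^ 2 * s) := by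
  rw [div_sqrt_one_add_mul_sq hu]
  calc v = (√((v ^ 2)⁻¹))⁻¹ := (inv_sqrt_inv_sq hv).symm
    _ ≤ (√((u ^ 2)⁻¹ + m * s))⁻¹ := by gcongr

lemma tendsto_mul_sqrt_of_tendsto_inv_sq_sub {x : ℕ → ℝ} {L : ℝ} (hx : ∀ t, 0 < x t) (hL : 0 < L)
    (h : Tendsto (fun t ↦ (x (t + 1) ^ 2)⁻¹ - (x t ^ 2)⁻¹) atTop (𝓝 L)) :
    Tendsto (fun t : ℕ ↦ x t * √t) atTop (𝓝 (√L)⁻¹) := by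
  have hmean := tendsto_inv_mul_of_tendsto_sub (f := fun t ↦ (x t ^ 2)⁻¹) h
  refine (hmean.sqrt.inv₀ (Real.sqrt_pos.2 hL).ne').congr fun t ↦ ?_
  rw [← mul_inv, Real.sqrt_inv, inv_inv, Real.sqrt_mul t.cast_nonneg, Real.sqrt_sq (hx t).le,
    mul_comm]

lemma eventually_mem_Icc_div_sqrt {f : ℕ → ℝ} {c₁ c₂ l : ℝ}
    (h : Tendsto (fun t : ℕ ↦ f t * √t) atTop (𝓝 l)) (h₁ : c₁ < l) (h₂ : l < c₂) :
    ∀ᶠ t : ℕ in atTop, f t ∈ Set.Icc (c₁ / √t) (c₂ / √t) := by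
  filter_upwards [h.eventually_const_lt h₁, h.eventually_lt_const h₂, eventually_gt_atTop 0]
    with t hlow hhigh ht
  have ht' : 0 < √(t : ℝ) := Real.sqrt_pos.2 (Nat.cast_pos.2 ht)
  exact ⟨(div_le_iff₀ ht').2 hlow.le, (le_div_iff₀ ht').2 hhigh.le⟩

end InverseSquare

section ParabolicMap

variable {α β γ : ℝ × ℝ → ℝ} {m k₁ k₂ : ℝ}

/-- The planar map `T(x, y) = ((1 - α y²) x, (1 + β x² - γ y²) y)` with coefficients depending on
the point; the theorem is the case `α = a + A`, `β = b + B`, `γ = c + C`. -/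
def parabolicMap (α β γ : ℝ × ℝ → ℝ) (p : ℝ × ℝ) : ℝ × ℝ :=
  ((1 - α p * p.2 ^ 2) * p.1, (1 + β p * p.1 ^ 2 - γ p * p.2 ^ 2) * p.2)

/-- The slope of the line along which the map with coefficients frozen at `p` acts radially. Its
value at the origin is `κ`. -/
noncomputable def criticalSlope (α β γ : ℝ × ℝ → ℝ) (p : ℝ × ℝ) : ℝ :=
  √(β p / (γ p - α p))

/-- The fraction of the way to `criticalSlope` that one step of `parabolicMap` moves the slope
`p.2 / p.1`. -/
noncomputable def slopeGain (α β γ : ℝ × ℝ → ℝ) (p : ℝ × ℝ) : ℝ :=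
  (γ p - α p) * p.2 * (p.2 + criticalSlope α β γ p * p.1) / (1 - α p * p.2 ^ 2)

lemma slope_parabolicMap {p : ℝ × ℝ} (hαγ : α p < γ p) (hβ : 0 ≤ β p) (hp : p.1 ≠ 0)
    (hw : α p * p.2 ^ 2 < 1) :
    (parabolicMap α β γ p).2 / (parabolicMap α β γ p).1 =
      (1 - slopeGain α β γ p) * (p.2 / p.1) + slopeGain α β γ p * criticalSlope α β γ p := by
  have hd : 0 < γ p - α p := sub_pos.2 hαγ
  have hk : (γ p - α p) * criticalSlope α β γ p ^ 2 = β p := by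
    rw [criticalSlope, Real.sq_sqrt (div_nonneg hβ hd.le), mul_div_cancel₀ _ hd.ne']
  have hw' : 1 - α p * p.2 ^ 2 ≠ 0 := (sub_pos.2 hw).ne'
  have hs : slopeGain α β γ p * (1 - α p * p.2 ^ 2) =
      (γ p - α p) * p.2 * (p.2 + criticalSlope α β γ p * p.1) := div_mul_cancel₀ _ hw'
  have hr : p.2 / p.1 * p.1 = p.2 := div_mul_cancel₀ _ hp
  rw [parabolicMap, div_eq_iff (mul_ne_zero hw' hp)]
  linear_combination (p.2 - criticalSlope α β γ p * p.1) * hs - p.1 ^ 2 * p.2 * hk -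
    (1 - slopeGain α β γ p) * (1 - α p * p.2 ^ 2) * hr

lemma inv_sq_fst_parabolicMap_sub {p : ℝ × ℝ} (hp : p.1 ≠ 0) (hw : α p * p.2 ^ 2 < 1) :
    ((parabolicMap α β γ p).1 ^ 2)⁻¹ - (p.1 ^ 2)⁻¹ =
      α p * (p.2 / p.1) ^ 2 * (2 - α p * p.2 ^ 2) / (1 - α p * p.2 ^ 2) ^ 2 := by
  have hw' : 1 - α p * p.2 ^ 2 ≠ 0 := (sub_pos.2 hw).ne'
  rw [parabolicMap]
  field_simp
  ring

/-- The conditions on a point under which a step of `parabolicMap` from it contracts the first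
coordinate and moves the slope to a convex combination of itself and a number in `[k₁, k₂]`. -/
structure IsTame (α β γ : ℝ × ℝ → ℝ) (m k₁ k₂ : ℝ) (p : ℝ × ℝ) : Prop where
  le_fst_coeff : m ≤ α p
  nonneg_coeff : 0 ≤ β p
  coeff_lt : α p < γ p
  mul_sq_lt_one : α p * p.2 ^ 2 < 1
  criticalSlope_mem : criticalSlope α β γ p ∈ Set.Icc k₁ k₂
  slopeGain_le_one : slopeGain α β γ p ≤ 1

section Continuity

lemma continuousAt_criticalSlope (hα : ContinuousAt α 0) (hβ : ContinuousAt β 0)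
    (hγ : ContinuousAt γ 0) (h : α 0 ≠ γ 0) : ContinuousAt (criticalSlope α β γ) 0 :=
  (hβ.div (hγ.sub hα) (sub_ne_zero.2 h.symm)).sqrt

lemma tendsto_mul_snd_sq (hα : ContinuousAt α 0) :
    Tendsto (fun p ↦ α p * p.2 ^ 2) (𝓝 0) (𝓝 0) := by
  have h : ContinuousAt (fun p ↦ α p * p.2 ^ 2) 0 := hα.mul (continuousAt_snd.pow 2)
  simpa using h.tendsto

lemma tendsto_slopeGain (hα : ContinuousAt α 0) (hβ : ContinuousAt β 0) (hγ : ContinuousAt γ 0)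
    (h : α 0 ≠ γ 0) : Tendsto (slopeGain α β γ) (𝓝 0) (𝓝 0) := by
  have hk := continuousAt_criticalSlope hα hβ hγ h
  have hnum : ContinuousAt (fun p ↦ (γ p - α p) * p.2 * (p.2 + criticalSlope α β γ p * p.1)) 0 :=
    ((hγ.sub hα).mul continuousAt_snd).mul (continuousAt_snd.add (hk.mul continuousAt_fst))
  have hden : ContinuousAt (fun p ↦ 1 - α p * p.2 ^ 2) 0 :=
    continuousAt_const.sub (hα.mul (continuousAt_snd.pow 2))
  have hquot : ContinuousAt (slopeGain α β γ) 0 := hnum.div hden (by simp)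
  simpa [slopeGain] using hquot.tendsto

lemma eventually_isTame (hα : ContinuousAt α 0) (hβ : ContinuousAt β 0) (hγ : ContinuousAt γ 0)
    (hαγ : α 0 < γ 0) (hβ₀ : 0 < β 0) (hm : m < α 0) (hk₁ : k₁ < criticalSlope α β γ 0)
    (hk₂ : criticalSlope α β γ 0 < k₂) : ∀ᶠ p in 𝓝 0, IsTame α β γ m k₁ k₂ p := by
  filter_upwards [hα.tendsto.eventually_const_le hm, hβ.tendsto.eventually_const_le hβ₀,
    hα.tendsto.eventually_lt hγ.tendsto hαγ,
    (tendsto_mul_snd_sq hα).eventually_lt_const one_pos,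
    (continuousAt_criticalSlope hα hβ hγ hαγ.ne).tendsto.eventually_mem (Icc_mem_nhds hk₁ hk₂),
    (tendsto_slopeGain hα hβ hγ hαγ.ne).eventually_le_const one_pos]
    with p h₁ h₂ h₃ h₄ h₅ h₆
  exact ⟨h₁, h₂, h₃, h₄, h₅, h₆⟩

end Continuity

namespace IsTame

variable {p : ℝ × ℝ}

lemma slopeGain_nonneg (h : IsTame α β γ m k₁ k₂ p) (hx : 0 < p.1) (hy : 0 < p.2) :
    0 ≤ slopeGain α β γ p := by
  have hk : 0 ≤ criticalSlope α β γ p := Real.sqrt_nonneg _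
  have hd : 0 < γ p - α p := sub_pos.2 h.coeff_lt
  have hw : 0 < 1 - α p * p.2 ^ 2 := sub_pos.2 h.mul_sq_lt_one
  unfold slopeGain
  positivity

lemma coeff_sub_mul_sq_le_slopeGain (h : IsTame α β γ m k₁ k₂ p) (hm : 0 < m) (hx : 0 < p.1)
    (hy : 0 < p.2) : (γ p - α p) * p.2 ^ 2 ≤ slopeGain α β γ p := by
  have hk : 0 ≤ criticalSlope α β γ p := Real.sqrt_nonneg _
  have hd : 0 < γ p - α p := sub_pos.2 h.coeff_lt
  have hα : 0 < α p := hm.trans_le h.le_fst_coeff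
  have hw : 1 - α p * p.2 ^ 2 ≤ 1 := sub_le_self _ (by positivity)
  calc (γ p - α p) * p.2 ^ 2 ≤ (γ p - α p) * p.2 * (p.2 + criticalSlope α β γ p * p.1) := by
        rw [sq, ← mul_assoc]
        gcongr
        exact le_add_of_nonneg_right (by positivity)
    _ ≤ slopeGain α β γ p :=
        le_div_self (by positivity) (sub_pos.2 h.mul_sq_lt_one) hw

lemma fst_parabolicMap_pos (h : IsTame α β γ m k₁ k₂ p) (hx : 0 < p.1) :
    0 < (parabolicMap α β γ p).1 :=
  mul_pos (sub_pos.2 h.mul_sq_lt_one) hx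

lemma fst_parabolicMap_le (h : IsTame α β γ m k₁ k₂ p) (hm : 0 < m) (hx : 0 < p.1) :
    (parabolicMap α β γ p).1 ≤ p.1 := by
  have hα : 0 < α p := hm.trans_le h.le_fst_coeff
  exact mul_le_of_le_one_left hx.le (sub_le_self _ (by positivity))

lemma slope_parabolicMap_mem_of_convex (h : IsTame α β γ m k₁ k₂ p) (hx : 0 < p.1) (hy : 0 < p.2)
    {K : Set ℝ} (hK : Convex ℝ K) (hp : p.2 / p.1 ∈ K) (hk : criticalSlope α β γ p ∈ K) :
    (parabolicMap α β γ p).2 / (parabolicMap α β γ p).1 ∈ K := by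
  rw [slope_parabolicMap h.coeff_lt h.nonneg_coeff hx.ne' h.mul_sq_lt_one]
  exact hK hp hk (sub_nonneg.2 h.slopeGain_le_one) (h.slopeGain_nonneg hx hy) (by ring)

lemma snd_parabolicMap_pos (h : IsTame α β γ m k₁ k₂ p) (hk₁ : 0 < k₁) (hx : 0 < p.1)
    (hy : 0 < p.2) : 0 < (parabolicMap α β γ p).2 := by
  have hslope := h.slope_parabolicMap_mem_of_convex hx hy (convex_Ioi 0) (div_pos hy hx)
    (hk₁.trans_le h.criticalSlope_mem.1)
  simpa [div_mul_cancel₀ _ (h.fst_parabolicMap_pos hx).ne'] using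
    mul_pos hslope (h.fst_parabolicMap_pos hx)

lemma snd_parabolicMap_le_max (h : IsTame α β γ m k₁ k₂ p) (hm : 0 < m) (hx : 0 < p.1)
    (hy : 0 < p.2) : (parabolicMap α β γ p).2 ≤ max p.2 (k₂ * p.1) := by
  have hslope := h.slope_parabolicMap_mem_of_convex hx hy (convex_Iic (max (p.2 / p.1) k₂))
    (Set.mem_Iic.2 (le_max_left _ _))
    (Set.mem_Iic.2 (h.criticalSlope_mem.2.trans (le_max_right _ _)))
  calc (parabolicMap α β γ p).2 ≤ max (p.2 / p.1) k₂ * (parabolicMap α β γ p).1 :=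
        (div_le_iff₀ (h.fst_parabolicMap_pos hx)).1 hslope
    _ ≤ max (p.2 / p.1) k₂ * p.1 := by
        gcongr
        exact h.fst_parabolicMap_le hm hx
    _ = max p.2 (k₂ * p.1) := by rw [max_mul_of_nonneg _ _ hx.le, div_mul_cancel₀ _ hx.ne']

end IsTame

/-- An orbit of `parabolicMap` inside the tame part of the open positive quadrant. -/
structure IsTameOrbit (α β γ : ℝ × ℝ → ℝ) (m k₁ k₂ : ℝ) (p : ℕ → ℝ × ℝ) : Prop where
  succ : ∀ t, p (t + 1) = parabolicMap α β γ (p t)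
  fst_pos : ∀ t, 0 < (p t).1
  snd_pos : ∀ t, 0 < (p t).2
  isTame : ∀ t, IsTame α β γ m k₁ k₂ (p t)

lemma mapsTo_parabolicMap_box {δ η : ℝ} (hm : 0 < m) (hk₁ : 0 < k₁) (hk₂ : 0 < k₂)
    (hδη : k₂ * δ ≤ η)
    (htame : ∀ p ∈ Set.Ioo 0 δ ×ˢ Set.Ioo 0 η, IsTame α β γ m k₁ k₂ p) :
    Set.MapsTo (parabolicMap α β γ) (Set.Ioo 0 δ ×ˢ Set.Ioo 0 η) (Set.Ioo 0 δ ×ˢ Set.Ioo 0 η) := by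
  intro p hp
  have h := htame p hp
  obtain ⟨⟨hx, hxδ⟩, hy, hyη⟩ := hp
  have hkx : k₂ * p.1 < η := (mul_lt_mul_of_pos_left hxδ hk₂).trans_le hδη
  exact ⟨⟨h.fst_parabolicMap_pos hx, (h.fst_parabolicMap_le hm hx).trans_lt hxδ⟩,
    h.snd_parabolicMap_pos hk₁ hx hy,
    (h.snd_parabolicMap_le_max hm hx hy).trans_lt (max_lt hyη hkx)⟩

theorem exists_forall_isTameOrbit (hm : 0 < m) (hk₁ : 0 < k₁) (hk₂ : 0 < k₂)
    (htame : ∀ᶠ p in 𝓝 0, IsTame α β γ m k₁ k₂ p) :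
    ∃ δ > 0, ∀ x₀ y₀ : ℝ, 0 < x₀ → x₀ < δ → 0 < y₀ → y₀ < δ →
      IsTameOrbit α β γ m k₁ k₂ fun t ↦ (parabolicMap α β γ)^[t] (x₀, y₀) := by
  obtain ⟨η, hη, hball⟩ := Metric.eventually_nhds_iff.1 htame
  set δ := min η (η / k₂)
  have hδη : δ ≤ η := min_le_left _ _
  have hkδ : k₂ * δ ≤ η := (le_div_iff₀' hk₂).1 (min_le_right _ _)
  have hbox : ∀ p ∈ Set.Ioo 0 δ ×ˢ Set.Ioo 0 η, IsTame α β γ m k₁ k₂ p := by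
    rintro p ⟨⟨hx, hxδ⟩, hy, hyη⟩
    refine hball (max_lt ?_ ?_)
    · simpa [abs_of_pos hx] using hxδ.trans_le hδη
    · simpa [abs_of_pos hy] using hyη
  refine ⟨δ, by positivity, fun x₀ y₀ hx₀ hx₀δ hy₀ hy₀δ ↦ ?_⟩
  have hmem (t : ℕ) : (parabolicMap α β γ)^[t] (x₀, y₀) ∈ Set.Ioo 0 δ ×ˢ Set.Ioo 0 η :=
    (mapsTo_parabolicMap_box hm hk₁ hk₂ hkδ hbox).iterate t
      ⟨⟨hx₀, hx₀δ⟩, hy₀, hy₀δ.trans_le hδη⟩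
  exact ⟨fun t ↦ Function.iterate_succ_apply' _ _ _, fun t ↦ (hmem t).1.1, fun t ↦ (hmem t).2.1,
    fun t ↦ hbox _ (hmem t)⟩

namespace IsTameOrbit

variable {p : ℕ → ℝ × ℝ}

lemma fst_succ (h : IsTameOrbit α β γ m k₁ k₂ p) (t : ℕ) :
    (p (t + 1)).1 = (1 - α (p t) * (p t).2 ^ 2) * (p t).1 := by
  rw [h.succ, parabolicMap]

lemma isRelaxation_slope (h : IsTameOrbit α β γ m k₁ k₂ p) :
    IsRelaxation (fun t ↦ slopeGain α β γ (p t)) (fun t ↦ criticalSlope α β γ (p t))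
      (fun t ↦ (p t).2 / (p t).1) where
  nonneg t := (h.isTame t).slopeGain_nonneg (h.fst_pos t) (h.snd_pos t)
  le_one t := (h.isTame t).slopeGain_le_one
  succ t := by
    rw [h.succ]
    exact slope_parabolicMap (h.isTame t).coeff_lt (h.isTame t).nonneg_coeff (h.fst_pos t).ne'
      (h.isTame t).mul_sq_lt_one

lemma exists_slope_mem_Icc (h : IsTameOrbit α β γ m k₁ k₂ p) (hk₁ : 0 < k₁) :
    ∃ ρ R : ℝ, 0 < ρ ∧ ∀ t, (p t).2 / (p t).1 ∈ Set.Icc ρ R := by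
  refine ⟨min ((p 0).2 / (p 0).1) k₁, max ((p 0).2 / (p 0).1) k₂,
    lt_min (div_pos (h.snd_pos 0) (h.fst_pos 0)) hk₁,
    h.isRelaxation_slope.mem_of_convex (convex_Icc _ _) ⟨min_le_left _ _, le_max_left _ _⟩
      fun t ↦ ?_⟩
  exact Set.Icc_subset_Icc (min_le_right _ _) (le_max_right _ _) (h.isTame t).criticalSlope_mem

theorem tendsto_zero (h : IsTameOrbit α β γ m k₁ k₂ p) (hm : 0 < m) (hk₁ : 0 < k₁) :
    Tendsto p atTop (𝓝 0) := by
  obtain ⟨ρ, R, hρ, hslope⟩ := h.exists_slope_mem_Icc hk₁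
  have hlow (t : ℕ) : ρ * (p t).1 ≤ (p t).2 := (le_div_iff₀ (h.fst_pos t)).1 (hslope t).1
  have hhigh (t : ℕ) : (p t).2 ≤ R * (p t).1 := (div_le_iff₀ (h.fst_pos t)).1 (hslope t).2
  have hfst : Tendsto (fun t ↦ (p t).1) atTop (𝓝 0) := by
    refine tendsto_zero_of_succ_le_sub_pow (m := m * ρ ^ 2) (n := 3) (by positivity)
      (fun t ↦ (h.fst_pos t).le) fun t ↦ ?_
    have hx := h.fst_pos t
    have hdecr : m * (ρ * (p t).1) ^ 2 * (p t).1 ≤ α (p t) * (p t).2 ^ 2 * (p t).1 := by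
      gcongr
      exacts [hm.le.trans (h.isTame t).le_fst_coeff, (h.isTame t).le_fst_coeff, hlow t]
    rw [h.fst_succ]
    linarith
  have hsnd : Tendsto (fun t ↦ (p t).2) atTop (𝓝 0) :=
    squeeze_zero (fun t ↦ (h.snd_pos t).le) hhigh (by simpa using hfst.const_mul R)
  exact hfst.prodMk_nhds hsnd

lemma not_summable_slopeGain (h : IsTameOrbit α β γ m k₁ k₂ p) (hm : 0 < m)
    (hα : ContinuousAt α 0) (hγ : ContinuousAt γ 0) (hαγ : α 0 < γ 0)
    (hp : Tendsto p atTop (𝓝 0)) : ¬Summable fun t ↦ slopeGain α β γ (p t) := by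
  intro hsum
  have hfst : Tendsto (fun t ↦ (p t).1) atTop (𝓝 0) := (continuous_fst.tendsto 0).comp hp
  refine not_summable_of_tendsto_zero (fun t ↦ (h.fst_pos t).ne') h.fst_succ hfst ?_
  obtain ⟨M, hM⟩ := exists_gt (α 0 / (γ 0 - α 0))
  have hratio : ContinuousAt (fun q ↦ α q / (γ q - α q)) 0 :=
    hα.div (hγ.sub hα) (sub_pos.2 hαγ).ne'
  refine (hsum.mul_left M).of_norm_bounded_eventually_nat ?_
  filter_upwards [hp.eventually (hratio.tendsto.eventually_lt_const hM)] with t ht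
  have hd : 0 < γ (p t) - α (p t) := sub_pos.2 (h.isTame t).coeff_lt
  have hαt : 0 < α (p t) := hm.trans_le (h.isTame t).le_fst_coeff
  have hM₀ : 0 < M := (div_pos hαt hd).trans ht
  calc ‖α (p t) * (p t).2 ^ 2‖ = α (p t) * (p t).2 ^ 2 := Real.norm_of_nonneg (by positivity)
    _ ≤ M * (γ (p t) - α (p t)) * (p t).2 ^ 2 := by
        gcongr
        exact ((div_lt_iff₀ hd).1 ht).le
    _ ≤ M * slopeGain α β γ (p t) := by
        rw [mul_assoc]
        gcongr
        exact (h.isTame t).coeff_sub_mul_sq_le_slopeGain hm (h.fst_pos t) (h.snd_pos t)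

theorem tendsto_slope (h : IsTameOrbit α β γ m k₁ k₂ p) (hm : 0 < m) (hk₁ : 0 < k₁)
    (hα : ContinuousAt α 0) (hβ : ContinuousAt β 0) (hγ : ContinuousAt γ 0) (hαγ : α 0 < γ 0) :
    Tendsto (fun t ↦ (p t).2 / (p t).1) atTop (𝓝 (criticalSlope α β γ 0)) :=
  have hp := h.tendsto_zero hm hk₁
  h.isRelaxation_slope.tendsto (h.not_summable_slopeGain hm hα hγ hαγ hp)
    ((continuousAt_criticalSlope hα hβ hγ hαγ.ne).tendsto.comp hp)

theorem tendsto_inv_sq_fst_sub (h : IsTameOrbit α β γ m k₁ k₂ p) {κ : ℝ}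
    (hα : ContinuousAt α 0) (hp : Tendsto p atTop (𝓝 0))
    (hslope : Tendsto (fun t ↦ (p t).2 / (p t).1) atTop (𝓝 κ)) :
    Tendsto (fun t ↦ ((p (t + 1)).1 ^ 2)⁻¹ - ((p t).1 ^ 2)⁻¹) atTop (𝓝 (2 * α 0 * κ ^ 2)) := by
  have hw := (tendsto_mul_snd_sq hα).comp hp
  have hincr := (((hα.tendsto.comp hp).mul (hslope.pow 2)).mul (hw.const_sub 2)).div
    ((hw.const_sub 1).pow 2) (by norm_num)
  rw [show α 0 * κ ^ 2 * (2 - 0) / (1 - 0) ^ 2 = 2 * α 0 * κ ^ 2 by ring] at hincr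
  refine hincr.congr fun t ↦ ?_
  rw [h.succ]
  exact (inv_sq_fst_parabolicMap_sub (h.fst_pos t).ne' (h.isTame t).mul_sq_lt_one).symm

end IsTameOrbit

end ParabolicMap

section Asymptotics

variable {p : ℕ → ℝ × ℝ} {a κ : ℝ}

lemma eventually_cone_of_tendsto_slope (hx : ∀ t, 0 < (p t).1) {ε : ℝ} (hε : 0 < ε)
    (hslope : Tendsto (fun t ↦ (p t).2 / (p t).1) atTop (𝓝 κ)) :
    ∀ᶠ t in atTop, (κ - ε) * (p t).1 ≤ (p t).2 ∧ (p t).2 ≤ (κ + ε) * (p t).1 := by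
  filter_upwards [hslope.eventually_const_le (sub_lt_self κ hε),
    hslope.eventually_le_const (lt_add_of_pos_right κ hε)] with t hlow hhigh
  exact ⟨(le_div_iff₀ (hx t)).1 hlow, (div_le_iff₀ (hx t)).1 hhigh⟩

theorem exists_forall_ge_bounds (ha : 0 < a) (hx : ∀ t, 0 < (p t).1)
    (hslope : Tendsto (fun t ↦ (p t).2 / (p t).1) atTop (𝓝 κ))
    (hincr : Tendsto (fun t ↦ ((p (t + 1)).1 ^ 2)⁻¹ - ((p t).1 ^ 2)⁻¹) atTop
      (𝓝 (2 * a * κ ^ 2)))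
    {ε : ℝ} (hε : 0 < ε) (hεκ : ε < κ) :
    ∃ τ : ℕ, ∀ t : ℕ, τ ≤ t →
      (p τ).1 / √(1 + 3 * a * (κ + ε) ^ 2 * (p τ).1 ^ 2 * ((t : ℝ) - τ)) ≤ (p t).1 ∧
      (p t).1 ≤ (p τ).1 / √(1 + 2 * a * (κ - ε) ^ 2 * (p τ).1 ^ 2 * ((t : ℝ) - τ)) ∧
      (κ - ε / 2) * (p t).1 ≤ (p t).2 ∧ (p t).2 ≤ (κ + ε / 2) * (p t).1 := by
  have hlow : 2 * a * (κ - ε) ^ 2 < 2 * a * κ ^ 2 := by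
    have : 0 ≤ κ - ε := sub_nonneg.2 hεκ.le
    gcongr
    exact sub_lt_self κ hε
  have hhigh : 2 * a * κ ^ 2 < 3 * a * (κ + ε) ^ 2 := by
    have : 0 < κ := hε.trans hεκ
    calc 2 * a * κ ^ 2 < 3 * a * κ ^ 2 := by gcongr; norm_num
      _ ≤ 3 * a * (κ + ε) ^ 2 := by gcongr; exact le_add_of_nonneg_right hε.le
  have hcone := eventually_cone_of_tendsto_slope hx (half_pos hε) hslope
  obtain ⟨τ, hτlow, hτhigh, hτcone⟩ :=
    ((eventually_add_mul_le_of_tendsto_sub (f := fun t ↦ ((p t).1 ^ 2)⁻¹) hincr hlow).and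
      ((eventually_le_add_mul_of_tendsto_sub (f := fun t ↦ ((p t).1 ^ 2)⁻¹) hincr hhigh).and
        (eventually_forall_ge_atTop.2 hcone))).exists
  refine ⟨τ, fun t ht ↦ ?_⟩
  have hs : (0 : ℝ) ≤ t - τ := sub_nonneg.2 (Nat.cast_le.2 ht)
  exact ⟨div_sqrt_le_of_inv_sq_le (hx τ) (hx t) (hτhigh t ht),
    le_div_sqrt_of_le_inv_sq (hx τ) (hx t) (by positivity) (hτlow t ht), hτcone t ht⟩

theorem exists_forall_ge_bounds_div_sqrt (ha : 0 < a) (hκ : 0 < κ) (hx : ∀ t, 0 < (p t).1)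
    (hslope : Tendsto (fun t ↦ (p t).2 / (p t).1) atTop (𝓝 κ))
    (hincr : Tendsto (fun t ↦ ((p (t + 1)).1 ^ 2)⁻¹ - ((p t).1 ^ 2)⁻¹) atTop
      (𝓝 (2 * a * κ ^ 2))) :
    ∃ c₁ c₂ : ℝ, ∃ T₀ : ℕ, 0 < c₁ ∧ c₁ ≤ c₂ ∧ ∀ t : ℕ, T₀ ≤ t →
      c₁ / √t ≤ (p t).1 ∧ (p t).1 ≤ c₂ / √t ∧ c₁ / √t ≤ (p t).2 ∧ (p t).2 ≤ c₂ / √t := by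
  set l := (√(2 * a * κ ^ 2))⁻¹
  have hl₀ : 0 < l := by positivity
  have hfst : Tendsto (fun t : ℕ ↦ (p t).1 * √t) atTop (𝓝 l) :=
    tendsto_mul_sqrt_of_tendsto_inv_sq_sub hx (by positivity) hincr
  have hsnd : Tendsto (fun t : ℕ ↦ (p t).2 * √t) atTop (𝓝 (κ * l)) :=
    (hslope.mul hfst).congr fun t ↦ by rw [← mul_assoc, div_mul_cancel₀ _ (hx t).ne']
  obtain ⟨c₁, hc₁, hlow⟩ := exists_between (lt_min hl₀ (mul_pos hκ hl₀))
  obtain ⟨c₂, hhigh⟩ := exists_gt (max l (κ * l))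
  obtain ⟨hlow₁, hlow₂⟩ := lt_min_iff.1 hlow
  obtain ⟨hhigh₁, hhigh₂⟩ := max_lt_iff.1 hhigh
  obtain ⟨T₀, hT₀⟩ := eventually_atTop.1 ((eventually_mem_Icc_div_sqrt hfst hlow₁ hhigh₁).and
    (eventually_mem_Icc_div_sqrt hsnd hlow₂ hhigh₂))
  refine ⟨c₁, c₂, T₀, hc₁, (hlow₁.trans hhigh₁).le, fun t ht ↦ ?_⟩
  obtain ⟨⟨hx₁, hx₂⟩, hy₁, hy₂⟩ := hT₀ t ht
  exact ⟨hx₁, hx₂, hy₁, hy₂⟩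

end Asymptotics

theorem stmt_0_general {α β γ : ℝ × ℝ → ℝ} (hα : ContinuousAt α 0) (hβ : ContinuousAt β 0)
    (hγ : ContinuousAt γ 0) {a b c κ : ℝ} (hαa : α 0 = a) (hβb : β 0 = b) (hγc : γ 0 = c)
    (ha : 0 < a) (hac : a < c) (hb : 0 < b) (hκ : κ = √(b / (c - a)))
    {T : ℝ × ℝ → ℝ × ℝ} (hT : T = parabolicMap α β γ) :
    ∃ δ : ℝ, 0 < δ ∧ ∀ x₀ y₀ : ℝ, 0 < x₀ → x₀ < δ → 0 < y₀ → y₀ < δ →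
      (∀ ε : ℝ, 0 < ε → ε < κ → ∃ τ : ℕ, ∀ t : ℕ, τ ≤ t →
        (T^[τ] (x₀, y₀)).1 /
            √(1 + 3 * a * (κ + ε) ^ 2 * (T^[τ] (x₀, y₀)).1 ^ 2 * ((t : ℝ) - τ))
          ≤ (T^[t] (x₀, y₀)).1 ∧
        (T^[t] (x₀, y₀)).1 ≤ (T^[τ] (x₀, y₀)).1 /
            √(1 + 2 * a * (κ - ε) ^ 2 * (T^[τ] (x₀, y₀)).1 ^ 2 * ((t : ℝ) - τ)) ∧
        (κ - ε / 2) * (T^[t] (x₀, y₀)).1 ≤ (T^[t] (x₀, y₀)).2 ∧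
        (T^[t] (x₀, y₀)).2 ≤ (κ + ε / 2) * (T^[t] (x₀, y₀)).1) ∧
      ∃ c₁ c₂ : ℝ, ∃ T₀ : ℕ, 0 < c₁ ∧ c₁ ≤ c₂ ∧ ∀ t : ℕ, T₀ ≤ t →
        c₁ / √t ≤ (T^[t] (x₀, y₀)).1 ∧ (T^[t] (x₀, y₀)).1 ≤ c₂ / √t ∧
        c₁ / √t ≤ (T^[t] (x₀, y₀)).2 ∧ (T^[t] (x₀, y₀)).2 ≤ c₂ / √t := by
  subst hαa hβb hγc hT
  have hκ₀ : 0 < κ := hκ ▸ Real.sqrt_pos.2 (div_pos hb (sub_pos.2 hac))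
  have hκ' : criticalSlope α β γ 0 = κ := hκ.symm
  have htame : ∀ᶠ p in 𝓝 0, IsTame α β γ (α 0 / 2) (κ / 2) (2 * κ) p :=
    eventually_isTame hα hβ hγ hac hb (half_lt_self ha) (by linarith) (by linarith)
  obtain ⟨δ, hδ, horbit⟩ := exists_forall_isTameOrbit (half_pos ha) (half_pos hκ₀)
    (mul_pos two_pos hκ₀) htame
  refine ⟨δ, hδ, fun x₀ y₀ hx₀ hx₀δ hy₀ hy₀δ ↦ ?_⟩
  have h := horbit x₀ y₀ hx₀ hx₀δ hy₀ hy₀δ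
  have hslope := hκ' ▸ h.tendsto_slope (half_pos ha) (half_pos hκ₀) hα hβ hγ hac
  have hincr := h.tendsto_inv_sq_fst_sub hα (h.tendsto_zero (half_pos ha) (half_pos hκ₀)) hslope
  exact ⟨fun ε hε hεκ ↦ exists_forall_ge_bounds ha h.fst_pos hslope hincr hε hεκ,
    exists_forall_ge_bounds_div_sqrt ha hκ₀ h.fst_pos hslope hincr⟩

/-- Theorem on parabolic dynamics / critical regime rates.
Iterates of the planar map `T(x,y) = ((1-(a+A(x,y))y²)x, (1+(b+B(x))x²-(c+C(y))y²)y)`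
starting near the origin in the open positive quadrant eventually track the invariant
curve `y ≈ κ x` and decay at the rate `Θ(t^(-1/2))`. -/
theorem stmt_0
    (a b c : ℝ) (ha : 0 < a) (hac : a < c) (hb : 0 < b)
    (A : ℝ × ℝ → ℝ) (B C : ℝ → ℝ)
    (hA : AnalyticAt ℝ A (0, 0)) (hBa : AnalyticAt ℝ B 0) (hCa : AnalyticAt ℝ C 0)
    (hA0 : A (0, 0) = 0) (hB0 : B 0 = 0) (hC0 : C 0 = 0)
    (T : ℝ × ℝ → ℝ × ℝ)
    (hT : ∀ x y : ℝ,
      T (x, y) = ((1 - (a + A (x, y)) * y ^ 2) * x,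
                  (1 + (b + B x) * x ^ 2 - (c + C y) * y ^ 2) * y))
    (κ : ℝ) (hκ : κ = Real.sqrt (b / (c - a))) :
    ∃ δ : ℝ, 0 < δ ∧ ∀ x₀ y₀ : ℝ, 0 < x₀ → x₀ < δ → 0 < y₀ → y₀ < δ →
      (∀ ε : ℝ, 0 < ε → ε < κ →
        ∃ τ : ℕ, ∀ t : ℕ, τ ≤ t →
          (T^[τ] (x₀, y₀)).1 /
              Real.sqrt (1 + 3 * a * (κ + ε) ^ 2 * (T^[τ] (x₀, y₀)).1 ^ 2 * ((t : ℝ) - (τ : ℝ)))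
            ≤ (T^[t] (x₀, y₀)).1 ∧
          (T^[t] (x₀, y₀)).1 ≤
            (T^[τ] (x₀, y₀)).1 /
              Real.sqrt (1 + 2 * a * (κ - ε) ^ 2 * (T^[τ] (x₀, y₀)).1 ^ 2 * ((t : ℝ) - (τ : ℝ))) ∧
          (κ - ε / 2) * (T^[t] (x₀, y₀)).1 ≤ (T^[t] (x₀, y₀)).2 ∧
          (T^[t] (x₀, y₀)).2 ≤ (κ + ε / 2) * (T^[t] (x₀, y₀)).1) ∧
      (∃ c₁ c₂ : ℝ, ∃ T₀ : ℕ, 0 < c₁ ∧ c₁ ≤ c₂ ∧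
        ∀ t : ℕ, T₀ ≤ t →
          c₁ / Real.sqrt t ≤ (T^[t] (x₀, y₀)).1 ∧ (T^[t] (x₀, y₀)).1 ≤ c₂ / Real.sqrt t ∧
          c₁ / Real.sqrt t ≤ (T^[t] (x₀, y₀)).2 ∧ (T^[t] (x₀, y₀)).2 ≤ c₂ / Real.sqrt t) := by
  exact stmt_0_general (α := fun p ↦ a + A p) (β := fun p ↦ b + B p.1) (γ := fun p ↦ c + C p.2)
    (continuousAt_const.add hA.continuousAt)
    (continuousAt_const.add (hBa.continuousAt.comp_of_eq continuousAt_fst rfl))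
    (continuousAt_const.add (hCa.continuousAt.comp_of_eq continuousAt_snd rfl))
    (by simp [← Prod.mk_zero_zero, hA0]) (by simpa using hB0) (by simpa using hC0) ha hac hb hκ
    (funext fun p ↦ hT p.1 p.2)
end

section
/- Let a, b > 0 and let f₁, f₂ be real-analytic functions of (x, y, α) on a neighbourhood of the origin of ℝ³ for which there is K > 0 with |f₁(x,y,α)| ≤ K(|y|³ + |x|y²) and |f₂(x,y,α)| ≤ K(|x|³ + |y|³) for all sufficiently small (x, y, α). For α > 0 define F^{(α)}(x,y) := ((1 − ay² + f₁(x,y,α))x, −(1 + α + bx² − y² + f₂(x,y,α))y). Then there exist constants ᾱ, C₀, C₁, C₂, C₃ > 0 such that for every α ∈ (0, ᾱ]: F^{(α)} admits a period-two orbit {(0, ξ₊), (0, ξ₋)} with ξ₊ > 0 > ξ₋ and |ξ± ∓ √α| ≤ C₀α, and for every initial point (x₀, y₀) with 0 < |y₀| ≤ C₁√α and |x₀| ≤ C₂√α there is a constant C₄ > 0 (depending on the initial point and α) such that the iterates (x_t, y_t) := (F^{(α)})^t(x₀, y₀) satisfy dist((x_t, y_t), {(0, ξ₊), (0, ξ₋)})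 ≤ C₄(1 − C₃α)^t for all t ∈ ℕ. -/
open Asymptotics Filter Set
open scoped Topology

/-!
Put `s = √α`. On the scale `s` the perturbation of the multiplier of `y` is at most `s² / 10`, so it
cannot compete with the cubic term: the box `|y| ≤ 11s/10` is forward invariant and every orbit off
the line `y = 0` is driven into the annulus `9s/10 ≤ |y|`. There `x` contracts at the rate
`1 - a y² / 2`, and two orbits whose `y`-coordinates have the same sign keep having equal signs and
approach each other at a rate `1 - C₃ α`. The latter holds because the unperturbed `y`-map has
derivative at most `1 - 7s²/5` in absolute value, while `∂_y f₂(0, y, α) = o(|y|)` uniformly in `α`: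
since `f₂` is `C²` and `O(|y|³)` on the axis, its first two `y`-derivatives vanish at `y = 0`,
`α = 0`, and the first one also for all nearby `α`.

The 2-cycle is a fixed point of the second iterate of the map on the invariant axis `x = 0`, given
by the intermediate value theorem; comparing it with the pair `±s`, which the unperturbed map swaps,
locates it. It attracts every orbit off `y = 0` because one of its two points has the same sign of
`y` as the initial point.
-/

theorem isBigO_pow_of_eventually_le_mul_add {κ q : ℝ} {d e : ℕ → ℝ} (hκ : 0 ≤ κ) (hκq : κ < q)
    (hd : ∀ n, 0 ≤ d n) (he : e =O[atTop] (q ^ ·))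
    (hstep : ∀ᶠ n in atTop, d (n + 1) ≤ κ * d n + e n) : d =O[atTop] (q ^ ·) := by
  have hq : 0 < q := hκ.trans_lt hκq
  obtain ⟨B, hB, heB⟩ := he.exists_nonneg
  obtain ⟨T, hT⟩ := eventually_atTop.1 (hstep.and heB.bound)
  set E := d T / q ^ T + B / (q - κ) with hE
  have hBE : B ≤ E * (q - κ) := by
    rw [← div_le_iff₀ (sub_pos.2 hκq)]
    exact le_add_of_nonneg_left (div_nonneg (hd T) (by positivity))
  have hbound : ∀ n ≥ T, d n ≤ E * q ^ n := by
    intro n hn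
    induction n, hn using Nat.le_induction with
    | base =>
      rw [hE, add_mul, div_mul_cancel₀ _ (by positivity)]
      exact le_add_of_nonneg_right
        (mul_nonneg (div_nonneg hB (sub_nonneg.2 hκq.le)) (by positivity))
    | succ n hn ih =>
      have hen : e n ≤ B * q ^ n := by
        simpa [abs_of_pos hq] using (le_abs_self _).trans (hT n hn).2
      calc d (n + 1) ≤ κ * d n + e n := (hT n hn).1
        _ ≤ κ * (E * q ^ n) + E * (q - κ) * q ^ n := by
          gcongr
          exact hen.trans (by gcongr)
        _ = E * q ^ (n + 1) := by ring
  refine .of_bound E (eventually_atTop.2 ⟨T, fun n hn => ?_⟩)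
  simpa [abs_of_nonneg (hd n), abs_of_pos hq] using hbound n hn

theorem monotoneOn_add_one_sub_sq_mul {β : ℝ} (hβ : 0 ≤ β) :
    MonotoneOn (fun y : ℝ => (1 + β - y ^ 2) * y) (Icc 0 (1 / 2)) := by
  rintro y ⟨hy₀, hy₁⟩ z ⟨hz₀, hz₁⟩ hyz
  have hfactor : 0 ≤ (z - y) * (1 + β - (y ^ 2 + y * z + z ^ 2)) :=
    mul_nonneg (sub_nonneg.2 hyz) (by nlinarith)
  linarith [show (z - y) * (1 + β - (y ^ 2 + y * z + z ^ 2))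
    = (1 + β - z ^ 2) * z - (1 + β - y ^ 2) * y by ring]

/-- The box `|x| ≤ r`, `|y| ≤ 11s/10`, forward invariant under a map satisfying `IsNearFlip`. The
factor `11/10` exceeds `√(11/10)`, where `y²/s²` balances `1 + w/s²` for the extreme perturbation
`w = s²/10`. -/
def trappingBox (r s : ℝ) : Set (ℝ × ℝ) := {z | |z.1| ≤ r ∧ |z.2| ≤ 11 / 10 * s}

/-- The part of `trappingBox r s` bounded away from the unstable line `y = 0`. The factor `9/10`
lies below `√(9/10)`, the balance for the opposite extreme `w = -s²/10`. -/
def trappingAnnulus (r s : ℝ) : Set (ℝ × ℝ) := {z ∈ trappingBox r s | 9 / 10 * s ≤ |z.2|}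

/-- The normal form at the parameter `α = s²`: the multiplier of `x` is an arbitrary function `p`,
and `w` perturbs the factor `1 + s² - y²` of the multiplier of `y`. -/
def flipMap (s : ℝ) (p w : ℝ × ℝ → ℝ) (z : ℝ × ℝ) : ℝ × ℝ :=
  (p z * z.1, -(1 + s ^ 2 - z.2 ^ 2 + w z) * z.2)

/-- The quantitative smallness of `p` and `w` on `trappingBox r s` that drives the dynamics of
`flipMap s p w`: a contraction rate `1 - c y²` in the `x`-direction, a small perturbation `w`
that is `Λ`-Lipschitz in `x` on the axis `x = 0`, and a small Lipschitz constant of `y w(0, y)`. -/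
structure IsNearFlip (s c r Λ : ℝ) (p w : ℝ × ℝ → ℝ) : Prop where
  scale_pos : 0 < s
  scale_le : s ≤ 1 / 10
  rate_pos : 0 < c
  width_nonneg : 0 ≤ r
  abs_p_le : ∀ z ∈ trappingBox r s, |p z| ≤ 1 - c * z.2 ^ 2
  abs_w_le : ∀ z ∈ trappingBox r s, |w z| ≤ s ^ 2 / 10
  abs_w_sub_le : ∀ z ∈ trappingBox r s, |w z - w (0, z.2)| ≤ Λ * |z.1|
  abs_mul_w_sub_le : ∀ y y', |y| ≤ 11 / 10 * s → |y'| ≤ 11 / 10 * s →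
    |y * w (0, y) - y' * w (0, y')| ≤ 2 / 5 * s ^ 2 * |y - y'|

/-- The points `(0, ξp)` and `(0, ξm)`, above and below the `x`-axis, form a 2-cycle of
`flipMap s p w` inside the trapping annulus. -/
structure IsAxisTwoCycle (s r : ℝ) (p w : ℝ × ℝ → ℝ) (ξp ξm : ℝ) : Prop where
  upper_pos : 0 < ξp
  lower_neg : ξm < 0
  upper_mem : (0, ξp) ∈ trappingAnnulus r s
  lower_mem : (0, ξm) ∈ trappingAnnulus r s
  map_upper : flipMap s p w (0, ξp) = (0, ξm)
  map_lower : flipMap s p w (0, ξm) = (0, ξp)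

namespace IsNearFlip

variable {s c r Λ : ℝ} {p w : ℝ × ℝ → ℝ} {z z' : ℝ × ℝ}

theorem zero_mk_mem_trappingBox (h : IsNearFlip s c r Λ p w) {y : ℝ} (hy : |y| ≤ 11 / 10 * s) :
    (0, y) ∈ trappingBox r s :=
  ⟨by simpa using h.width_nonneg, hy⟩

theorem snd_sq_le (hz : z ∈ trappingBox r s) : z.2 ^ 2 ≤ 121 / 100 * s ^ 2 := by
  have := pow_le_pow_left₀ (abs_nonneg _) hz.2 2
  rw [sq_abs] at this
  linarith

theorem le_snd_sq (h : IsNearFlip s c r Λ p w) (hz : z ∈ trappingAnnulus r s) :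
    81 / 100 * s ^ 2 ≤ z.2 ^ 2 := by
  have hs := h.scale_pos
  have := pow_le_pow_left₀ (by positivity) hz.2 2
  rw [sq_abs] at this
  linarith

theorem scale_sq_le (h : IsNearFlip s c r Λ p w) : s ^ 2 ≤ 1 / 100 := by
  have := pow_le_pow_left₀ h.scale_pos.le h.scale_le 2
  linarith

theorem sndMultiplier_pos (h : IsNearFlip s c r Λ p w) (hz : z ∈ trappingBox r s) :
    0 < 1 + s ^ 2 - z.2 ^ 2 + w z := by
  linarith [snd_sq_le hz, h.scale_sq_le, (abs_le.1 (h.abs_w_le z hz)).1]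

theorem abs_snd_flipMap (h : IsNearFlip s c r Λ p w) (hz : z ∈ trappingBox r s) :
    |(flipMap s p w z).2| = (1 + s ^ 2 - |z.2| ^ 2 + w z) * |z.2| := by
  rw [flipMap, abs_mul, abs_neg, abs_of_pos (h.sndMultiplier_pos hz), sq_abs]

theorem snd_mul_snd_flipMap_pos (h : IsNearFlip s c r Λ p w) (hz : z ∈ trappingBox r s)
    (hz' : z' ∈ trappingBox r s) (hpos : 0 < z.2 * z'.2) :
    0 < (flipMap s p w z).2 * (flipMap s p w z').2 := by
  have := mul_pos (mul_pos (h.sndMultiplier_pos hz) (h.sndMultiplier_pos hz')) hpos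
  simp only [flipMap]
  linarith

theorem abs_snd_flipMap_le (h : IsNearFlip s c r Λ p w) (hz : z ∈ trappingBox r s) :
    |(flipMap s p w z).2| ≤ 11 / 10 * s := by
  have hs := h.scale_pos
  have hw := (abs_le.1 (h.abs_w_le z hz)).2
  calc |(flipMap s p w z).2| = (1 + s ^ 2 - |z.2| ^ 2 + w z) * |z.2| := h.abs_snd_flipMap hz
    _ ≤ (1 + 11 / 10 * s ^ 2 - |z.2| ^ 2) * |z.2| := by gcongr; linarith
    _ ≤ (1 + 11 / 10 * s ^ 2 - (11 / 10 * s) ^ 2) * (11 / 10 * s) :=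
      monotoneOn_add_one_sub_sq_mul (by positivity)
        ⟨abs_nonneg _, by linarith [hz.2, h.scale_le]⟩
        ⟨by positivity, by linarith [h.scale_le]⟩ hz.2
    _ ≤ 1 * (11 / 10 * s) := by gcongr; nlinarith
    _ = 11 / 10 * s := one_mul _

theorem le_abs_snd_flipMap (h : IsNearFlip s c r Λ p w) (hz : z ∈ trappingAnnulus r s) :
    9 / 10 * s ≤ |(flipMap s p w z).2| := by
  have hs := h.scale_pos
  have hw := (abs_le.1 (h.abs_w_le z hz.1)).1
  calc 9 / 10 * s = 1 * (9 / 10 * s) := (one_mul _).symm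
    _ ≤ (1 + 9 / 10 * s ^ 2 - (9 / 10 * s) ^ 2) * (9 / 10 * s) := by gcongr; nlinarith
    _ ≤ (1 + 9 / 10 * s ^ 2 - |z.2| ^ 2) * |z.2| :=
      monotoneOn_add_one_sub_sq_mul (by positivity) ⟨by positivity, by linarith [h.scale_le]⟩
        ⟨abs_nonneg _, by linarith [hz.1.2, h.scale_le]⟩ hz.2
    _ ≤ (1 + s ^ 2 - |z.2| ^ 2 + w z) * |z.2| := by gcongr; linarith
    _ = |(flipMap s p w z).2| := (h.abs_snd_flipMap hz.1).symm

theorem abs_fst_flipMap_le (h : IsNearFlip s c r Λ p w) (hz : z ∈ trappingBox r s) :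
    |(flipMap s p w z).1| ≤ (1 - c * z.2 ^ 2) * |z.1| := by
  rw [flipMap, abs_mul]
  exact mul_le_mul_of_nonneg_right (h.abs_p_le z hz) (abs_nonneg _)

theorem mapsTo_trappingBox (h : IsNearFlip s c r Λ p w) :
    MapsTo (flipMap s p w) (trappingBox r s) (trappingBox r s) := by
  refine fun z hz => ⟨(h.abs_fst_flipMap_le hz).trans (le_trans ?_ hz.1), h.abs_snd_flipMap_le hz⟩
  have hc := h.rate_pos
  exact mul_le_of_le_one_left (abs_nonneg _) (sub_le_self _ (by positivity))

theorem mapsTo_trappingAnnulus (h : IsNearFlip s c r Λ p w) :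
    MapsTo (flipMap s p w) (trappingAnnulus r s) (trappingAnnulus r s) :=
  fun _ hz => ⟨h.mapsTo_trappingBox hz.1, h.le_abs_snd_flipMap hz⟩

theorem mul_abs_snd_le_abs_snd_flipMap (h : IsNearFlip s c r Λ p w) (hz : z ∈ trappingBox r s)
    (hlow : |z.2| ≤ 9 / 10 * s) : (1 + 9 / 100 * s ^ 2) * |z.2| ≤ |(flipMap s p w z).2| := by
  have hsq := pow_le_pow_left₀ (abs_nonneg _) hlow 2
  rw [h.abs_snd_flipMap hz]
  refine mul_le_mul_of_nonneg_right ?_ (abs_nonneg _)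
  linarith [(abs_le.1 (h.abs_w_le z hz)).1]

theorem eventually_iterate_mem_trappingAnnulus (h : IsNearFlip s c r Λ p w)
    (hz : z ∈ trappingBox r s) (hz₀ : z.2 ≠ 0) :
    ∀ᶠ t in atTop, (flipMap s p w)^[t] z ∈ trappingAnnulus r s := by
  have hbox t : (flipMap s p w)^[t] z ∈ trappingBox r s := h.mapsTo_trappingBox.iterate t hz
  obtain ⟨T, hT⟩ : ∃ T, 9 / 10 * s ≤ |((flipMap s p w)^[T] z).2| := by
    by_contra! hlow
    have hgrowth t : (1 + 9 / 100 * s ^ 2) ^ t * |z.2| ≤ |((flipMap s p w)^[t] z).2| := by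
      induction t with
      | zero => simp
      | succ t ih =>
        rw [pow_succ', mul_assoc, Function.iterate_succ_apply']
        refine le_trans ?_ (h.mul_abs_snd_le_abs_snd_flipMap (hbox t) (hlow t).le)
        gcongr
    have hs := h.scale_pos
    obtain ⟨n, hn⟩ := pow_unbounded_of_one_lt (9 / 10 * s / |z.2|)
      (show 1 < 1 + 9 / 100 * s ^ 2 by linarith [sq_pos_of_pos hs])
    rw [div_lt_iff₀ (abs_pos.2 hz₀)] at hn
    exact (hn.trans_le (hgrowth n)).not_gt (hlow n)
  refine eventually_atTop.2 ⟨T, fun t ht => ?_⟩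
  obtain ⟨n, rfl⟩ := Nat.exists_eq_add_of_le' ht
  rw [Function.iterate_add_apply]
  exact h.mapsTo_trappingAnnulus.iterate n ⟨hbox T, hT⟩

theorem abs_snd_flipMap_zero_sub_le (h : IsNearFlip s c r Λ p w) {y y' : ℝ}
    (hy : (0, y) ∈ trappingAnnulus r s) (hy' : (0, y') ∈ trappingAnnulus r s) (hpos : 0 < y * y') :
    |(flipMap s p w (0, y)).2 - (flipMap s p w (0, y')).2| ≤ (1 - s ^ 2) * |y - y'| := by
  have hs := h.scale_pos
  have hs₂ := h.scale_sq_le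
  have hsq := snd_sq_le hy.1
  have hsq' := snd_sq_le hy'.1
  have hmul : 81 / 100 * s ^ 2 ≤ y * y' := by
    have := mul_le_mul hy.2 hy'.2 (by positivity) (abs_nonneg _)
    rw [← abs_mul, abs_of_pos hpos] at this
    linarith
  have hcubic : |1 + s ^ 2 - (y ^ 2 + y * y' + y' ^ 2)| ≤ 1 - 7 / 5 * s ^ 2 := by
    rw [abs_le]
    constructor <;> nlinarith [sq_nonneg (y - y')]
  calc |(flipMap s p w (0, y)).2 - (flipMap s p w (0, y')).2|
      = |(1 + s ^ 2 - (y ^ 2 + y * y' + y' ^ 2)) * (y - y')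
          + (y * w (0, y) - y' * w (0, y'))| := by
        rw [← abs_neg]; congr 1; simp only [flipMap]; ring
    _ ≤ (1 - 7 / 5 * s ^ 2) * |y - y'| + 2 / 5 * s ^ 2 * |y - y'| := by
        refine (abs_add_le _ _).trans (add_le_add ?_ (h.abs_mul_w_sub_le y y' hy.1.2 hy'.1.2))
        rw [abs_mul]
        gcongr
    _ = (1 - s ^ 2) * |y - y'| := by ring

theorem abs_snd_flipMap_sub_zero_le (h : IsNearFlip s c r Λ p w) (hz : z ∈ trappingBox r s) :
    |(flipMap s p w z).2 - (flipMap s p w (0, z.2)).2| ≤ Λ * |z.1| := by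
  have hy : |z.2| ≤ 1 := by linarith [hz.2, h.scale_le]
  calc |(flipMap s p w z).2 - (flipMap s p w (0, z.2)).2| = |w z - w (0, z.2)| * |z.2| := by
        rw [← abs_mul, ← abs_neg]; congr 1; simp only [flipMap]; ring
    _ ≤ |w z - w (0, z.2)| := mul_le_of_le_one_right (abs_nonneg _) hy
    _ ≤ Λ * |z.1| := h.abs_w_sub_le z hz

theorem abs_snd_flipMap_sub_le (h : IsNearFlip s c r Λ p w) (hz : z ∈ trappingAnnulus r s)
    (hz' : z' ∈ trappingAnnulus r s) (hpos : 0 < z.2 * z'.2) :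
    |(flipMap s p w z).2 - (flipMap s p w z').2|
      ≤ (1 - s ^ 2) * |z.2 - z'.2| + Λ * (|z.1| + |z'.1|) := by
  have haxis : ∀ {v}, v ∈ trappingAnnulus r s → (0, v.2) ∈ trappingAnnulus r s :=
    fun hv => ⟨h.zero_mk_mem_trappingBox hv.1.2, hv.2⟩
  have hz_axis := h.abs_snd_flipMap_sub_zero_le hz.1
  have hz'_axis := h.abs_snd_flipMap_sub_zero_le hz'.1
  have hslice := h.abs_snd_flipMap_zero_sub_le (haxis hz) (haxis hz') hpos
  rw [abs_sub_comm] at hz'_axis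
  have htri := (abs_sub_le (flipMap s p w z).2 (flipMap s p w (0, z.2)).2 _).trans
    (add_le_add_right (abs_sub_le _ (flipMap s p w (0, z'.2)).2 (flipMap s p w z').2) _)
  linarith

theorem fst_iterate_isBigO (h : IsNearFlip s c r Λ p w) (hz : z ∈ trappingBox r s)
    (hz₀ : z.2 ≠ 0) :
    (fun t => ((flipMap s p w)^[t] z).1) =O[atTop] ((1 - min (1 / 2) (c / 2) * s ^ 2) ^ ·) := by
  have hs := h.scale_pos
  have hc := h.rate_pos
  have hcs : 0 ≤ 1 - c * (11 / 10 * s) ^ 2 := (abs_nonneg _).trans (h.abs_p_le (0, 11 / 10 * s)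
    (h.zero_mk_mem_trappingBox (abs_of_pos (by positivity)).le))
  have hrate : 1 - c * (81 / 100 * s ^ 2) < 1 - min (1 / 2) (c / 2) * s ^ 2 := by
    have : min (1 / 2) (c / 2) * s ^ 2 ≤ c / 2 * s ^ 2 := by gcongr; exact min_le_right _ _
    nlinarith [mul_pos hc (sq_pos_of_pos hs)]
  refine IsBigO.of_norm_left (isBigO_pow_of_eventually_le_mul_add (e := 0) (by nlinarith) hrate
    (fun _ => norm_nonneg _) (isBigO_zero _ _) ?_)
  filter_upwards [h.eventually_iterate_mem_trappingAnnulus hz hz₀] with t ht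
  rw [Function.iterate_succ_apply', Pi.zero_apply, add_zero]
  refine (h.abs_fst_flipMap_le ht.1).trans ?_
  rw [Real.norm_eq_abs]
  gcongr
  exact h.le_snd_sq ht

theorem snd_iterate_sub_isBigO (h : IsNearFlip s c r Λ p w) (hz : z ∈ trappingBox r s)
    (hz' : z' ∈ trappingBox r s) (hpos : 0 < z.2 * z'.2) :
    (fun t => ((flipMap s p w)^[t] z).2 - ((flipMap s p w)^[t] z').2)
      =O[atTop] ((1 - min (1 / 2) (c / 2) * s ^ 2) ^ ·) := by
  have hs := h.scale_pos
  have hs₂ := h.scale_sq_le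
  have hz₀ : z.2 ≠ 0 := left_ne_zero_of_mul hpos.ne'
  have hz'₀ : z'.2 ≠ 0 := right_ne_zero_of_mul hpos.ne'
  have hsign t : 0 < ((flipMap s p w)^[t] z).2 * ((flipMap s p w)^[t] z').2 := by
    induction t with
    | zero => exact hpos
    | succ t ih =>
      rw [Function.iterate_succ_apply', Function.iterate_succ_apply']
      exact h.snd_mul_snd_flipMap_pos (h.mapsTo_trappingBox.iterate t hz)
        (h.mapsTo_trappingBox.iterate t hz') ih
  have hrate : 1 - s ^ 2 < 1 - min (1 / 2) (c / 2) * s ^ 2 := by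
    have : min (1 / 2) (c / 2) * s ^ 2 ≤ 1 / 2 * s ^ 2 := by gcongr; exact min_le_left _ _
    linarith [sq_pos_of_pos hs]
  refine IsBigO.of_norm_left (isBigO_pow_of_eventually_le_mul_add (by linarith) hrate
    (fun _ => norm_nonneg _) (((h.fst_iterate_isBigO hz hz₀).norm_left.add
      (h.fst_iterate_isBigO hz' hz'₀).norm_left).const_mul_left Λ) ?_)
  filter_upwards [h.eventually_iterate_mem_trappingAnnulus hz hz₀,
    h.eventually_iterate_mem_trappingAnnulus hz' hz'₀] with t ht ht'
  rw [Function.iterate_succ_apply', Function.iterate_succ_apply']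
  exact h.abs_snd_flipMap_sub_le ht ht' (hsign t)

theorem snd_flipMap_mul_snd_neg (h : IsNearFlip s c r Λ p w) (hz : z ∈ trappingBox r s)
    (hz₀ : z.2 ≠ 0) : (flipMap s p w z).2 * z.2 < 0 := by
  have := mul_pos (h.sndMultiplier_pos hz) (sq_pos_of_ne_zero hz₀)
  simp only [flipMap]
  linarith

theorem flipMap_zero_mk (y : ℝ) : flipMap s p w (0, y) = (0, (flipMap s p w (0, y)).2) := by
  simp only [flipMap, mul_zero]

theorem continuousOn_snd_flipMap_zero_mk (h : IsNearFlip s c r Λ p w) :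
    ContinuousOn (fun y => (flipMap s p w (0, y)).2) (Icc (-(11 / 10 * s)) (11 / 10 * s)) := by
  have hlip : LipschitzOnWith (2 / 5 * s ^ 2).toNNReal (fun y => y * w (0, y))
      (Icc (-(11 / 10 * s)) (11 / 10 * s)) := by
    refine .of_dist_le_mul fun y hy y' hy' => ?_
    rw [Real.dist_eq, Real.dist_eq, Real.coe_toNNReal _ (by positivity)]
    exact h.abs_mul_w_sub_le y y' (abs_le.2 hy) (abs_le.2 hy')
  have hpoly : Continuous fun y : ℝ => -(1 + s ^ 2 - y ^ 2) * y := by fun_prop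
  refine (hpoly.continuousOn.sub hlip.continuousOn).congr fun y _ => ?_
  simp only [flipMap, Pi.sub_apply]
  ring

theorem exists_isAxisTwoCycle (h : IsNearFlip s c r Λ p w) :
    ∃ ξp ξm, IsAxisTwoCycle s r p w ξp ξm := by
  have hs := h.scale_pos
  set G : ℝ → ℝ := fun y => (flipMap s p w (0, y)).2
  have hannulus : ∀ {y}, (0, y) ∈ trappingAnnulus r s → (0, G y) ∈ trappingAnnulus r s :=
    fun {y} hy => flipMap_zero_mk (s := s) (p := p) (w := w) y ▸ h.mapsTo_trappingAnnulus hy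
  have hsign : ∀ {y}, (0, y) ∈ trappingAnnulus r s → G y * y < 0 := fun {y} hy =>
    h.snd_flipMap_mul_snd_neg hy.1 (abs_pos.1 ((by positivity : 0 < 9 / 10 * s).trans_le hy.2))
  have hmem : ∀ {y}, y ∈ Icc (9 / 10 * s) (11 / 10 * s) → 0 < y ∧ (0, y) ∈ trappingAnnulus r s := by
    intro y hy
    have hy₀ : 0 < y := (by positivity : 0 < 9 / 10 * s).trans_le hy.1
    rw [← abs_of_pos hy₀] at hy
    exact ⟨hy₀, h.zero_mk_mem_trappingBox hy.2, hy.1⟩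
  obtain ⟨ξ, hξ, hfix⟩ : ∃ ξ ∈ Icc (9 / 10 * s) (11 / 10 * s), Function.IsFixedPt (G ∘ G) ξ := by
    refine exists_mem_Icc_isFixedPt_of_mapsTo ?_ (by linarith) fun y hy => ?_
    · refine h.continuousOn_snd_flipMap_zero_mk.comp (h.continuousOn_snd_flipMap_zero_mk.mono ?_)
        fun y hy => abs_le.1 (hannulus (hmem hy).2).1.2
      exact Icc_subset_Icc_left (by linarith)
    · obtain ⟨hy₀, hy⟩ := hmem hy
      have hGy : G y < 0 := neg_of_mul_neg_left (hsign hy) hy₀.le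
      have hGGy : 0 < G (G y) := pos_of_mul_neg_left (hsign (hannulus hy)) hGy.le
      have hGGy_mem := hannulus (hannulus hy)
      rw [Function.comp_apply, ← abs_of_pos hGGy]
      exact ⟨hGGy_mem.2, hGGy_mem.1.2⟩
  obtain ⟨hξ₀, hξ⟩ := hmem hξ
  refine ⟨ξ, G ξ, hξ₀, neg_of_mul_neg_left (hsign hξ) hξ₀.le, hξ, hannulus hξ,
    flipMap_zero_mk ξ, ?_⟩
  rw [flipMap_zero_mk]
  exact congrArg (Prod.mk 0) hfix

theorem abs_snd_flipMap_zero_add_le (h : IsNearFlip s c r Λ p w) {K ξ σ : ℝ}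
    (hξ : (0, ξ) ∈ trappingAnnulus r s) (hσ : |σ| = s) (hpos : 0 < ξ * σ)
    (hw : |w (0, σ)| ≤ K * s ^ 3) :
    |(flipMap s p w (0, ξ)).2 + σ| ≤ (1 - s ^ 2) * |ξ - σ| + K * s ^ 4 := by
  have hs := h.scale_pos
  have hσ_mem : (0, σ) ∈ trappingAnnulus r s :=
    ⟨h.zero_mk_mem_trappingBox (by linarith), by simp only [hσ]; linarith⟩
  have hσ_image : (flipMap s p w (0, σ)).2 + σ = -(w (0, σ) * σ) := by
    simp only [flipMap, ← hσ, sq_abs]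
    ring
  calc |(flipMap s p w (0, ξ)).2 + σ|
      = |((flipMap s p w (0, ξ)).2 - (flipMap s p w (0, σ)).2) + -(w (0, σ) * σ)| := by
        rw [← hσ_image]; ring_nf
    _ ≤ (1 - s ^ 2) * |ξ - σ| + K * s ^ 3 * s := by
        refine (abs_add_le _ _).trans
          (add_le_add (h.abs_snd_flipMap_zero_sub_le hξ hσ_mem hpos) ?_)
        rw [abs_neg, abs_mul, hσ]
        gcongr
    _ = (1 - s ^ 2) * |ξ - σ| + K * s ^ 4 := by ring

theorem abs_axisTwoCycle_sub_le (h : IsNearFlip s c r Λ p w) {K ξp ξm : ℝ}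
    (hξ : IsAxisTwoCycle s r p w ξp ξm) (hw : ∀ σ, |σ| = s → |w (0, σ)| ≤ K * s ^ 3) :
    |ξp - s| ≤ K * s ^ 2 ∧ |ξm + s| ≤ K * s ^ 2 := by
  have hs := h.scale_pos
  have hs_abs : |s| = s := abs_of_pos hs
  have hneg_abs : |-s| = s := (abs_neg s).trans hs_abs
  have hm_le := h.abs_snd_flipMap_zero_add_le hξ.upper_mem hs_abs
    (mul_pos hξ.upper_pos hs) (hw s hs_abs)
  have hp_le := h.abs_snd_flipMap_zero_add_le hξ.lower_mem hneg_abs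
    (mul_pos_of_neg_of_neg hξ.lower_neg (neg_neg_of_pos hs)) (hw (-s) hneg_abs)
  rw [hξ.map_upper] at hm_le
  rw [hξ.map_lower, ← sub_eq_add_neg, sub_neg_eq_add] at hp_le
  have hcancel : ∀ {u}, u ≤ (1 - s ^ 2) * u + K * s ^ 4 → u ≤ K * s ^ 2 := fun {u} hu =>
    le_of_mul_le_mul_left (a := s ^ 2) (by linarith) (by positivity)
  have hnonneg : 0 ≤ 1 - s ^ 2 := by linarith [h.scale_sq_le]
  rcases le_total |ξp - s| |ξm + s| with hle | hle
  · have hξm_le := hcancel (hm_le.trans (by gcongr))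
    exact ⟨hle.trans hξm_le, hξm_le⟩
  · have hξp_le := hcancel (hp_le.trans (by gcongr))
    exact ⟨hξp_le, hle.trans hξp_le⟩

theorem min_sqrt_iterate_isBigO (h : IsNearFlip s c r Λ p w) {ξp ξm : ℝ}
    (hξ : IsAxisTwoCycle s r p w ξp ξm) (hz : z ∈ trappingBox r s) (hz₀ : z.2 ≠ 0) :
    (fun t => min √(((flipMap s p w)^[t] z).1 ^ 2 + (((flipMap s p w)^[t] z).2 - ξp) ^ 2)
        √(((flipMap s p w)^[t] z).1 ^ 2 + (((flipMap s p w)^[t] z).2 - ξm) ^ 2))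
      =O[atTop] ((1 - min (1 / 2) (c / 2) * s ^ 2) ^ ·) := by
  obtain ⟨ζ, hζ, hζ_mem, hpos⟩ : ∃ ζ ∈ ({(0, ξp), (0, ξm)} : Set (ℝ × ℝ)),
      ζ ∈ trappingBox r s ∧ 0 < z.2 * ζ.2 := by
    rcases hz₀.lt_or_gt with hneg | hpos
    · exact ⟨(0, ξm), by simp, hξ.lower_mem.1, mul_pos_of_neg_of_neg hneg hξ.lower_neg⟩
    · exact ⟨(0, ξp), by simp, hξ.upper_mem.1, mul_pos hpos hξ.upper_pos⟩
  have hcycle : MapsTo (flipMap s p w) {(0, ξp), (0, ξm)} {(0, ξp), (0, ξm)} := by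
    rintro _ (rfl | rfl)
    · simp [hξ.map_upper]
    · simp [hξ.map_lower]
  refine IsBigO.trans (.of_norm_le (g := fun t => ‖((flipMap s p w)^[t] z).1‖
      + ‖((flipMap s p w)^[t] z).2 - ((flipMap s p w)^[t] ζ).2‖) fun t => ?_)
    ((h.fst_iterate_isBigO hz hz₀).norm_left.add
      (h.snd_iterate_sub_isBigO hz hζ_mem hpos).norm_left)
  have hsqrt (u v : ℝ) : √(u ^ 2 + v ^ 2) ≤ ‖u‖ + ‖v‖ := by
    simpa [Complex.norm_eq_sqrt_sq_add_sq] using Complex.norm_le_abs_re_add_abs_im ⟨u, v⟩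
  rw [Real.norm_eq_abs, abs_of_nonneg (by positivity)]
  rcases hcycle.iterate t hζ with hζt | hζt
  · rw [hζt]
    exact (min_le_left _ _).trans (hsqrt _ _)
  · rw [mem_singleton_iff.1 hζt]
    exact (min_le_right _ _).trans (hsqrt _ _)

theorem exists_min_sqrt_iterate_le (h : IsNearFlip s c r Λ p w) {ξp ξm : ℝ}
    (hξ : IsAxisTwoCycle s r p w ξp ξm) (hz : z ∈ trappingBox r s) (hz₀ : z.2 ≠ 0) :
    ∃ B > 0, ∀ t : ℕ,
      min √(((flipMap s p w)^[t] z).1 ^ 2 + (((flipMap s p w)^[t] z).2 - ξp) ^ 2)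
          √(((flipMap s p w)^[t] z).1 ^ 2 + (((flipMap s p w)^[t] z).2 - ξm) ^ 2)
        ≤ B * (1 - min (1 / 2) (c / 2) * s ^ 2) ^ t := by
  have hrate : 0 < 1 - min (1 / 2) (c / 2) * s ^ 2 := by
    have : min (1 / 2) (c / 2) * s ^ 2 ≤ 1 / 2 * s ^ 2 := by gcongr; exact min_le_left _ _
    linarith [h.scale_sq_le]
  obtain ⟨B, hB, hbound⟩ := bound_of_isBigO_nat_atTop
    (h.min_sqrt_iterate_isBigO hξ hz hz₀)
  refine ⟨B, hB, fun t => (le_abs_self _).trans ?_⟩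
  simpa only [Real.norm_eq_abs, abs_pow, abs_of_pos hrate]
    using hbound (x := t) (pow_ne_zero t hrate.ne')

end IsNearFlip

section SmallPerturbation

variable {E P G : Type*} [NormedAddCommGroup E] [NormedSpace ℝ E] [NormedAddCommGroup P]
  [NormedSpace ℝ P] [NormedAddCommGroup G] [NormedSpace ℝ G]

theorem exists_eventually_norm_sub_le_of_contDiffAt {f : E × P → G} {x₀ : E} {p₀ : P}
    (hf : ContDiffAt ℝ 1 f (x₀, p₀)) :
    ∃ L : ℝ, ∀ᶠ v in 𝓝 (x₀, p₀), ‖f v - f (x₀, v.2)‖ ≤ L * ‖v.1 - x₀‖ := by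
  obtain ⟨L, t, ht, hL⟩ := hf.exists_lipschitzOnWith
  have hproj : Tendsto (fun v : E × P => (x₀, v.2)) (𝓝 (x₀, p₀)) (𝓝 (x₀, p₀)) :=
    (by fun_prop : Continuous fun v : E × P => (x₀, v.2)).tendsto' _ _ rfl
  refine ⟨L, ?_⟩
  filter_upwards [ht, hproj ht] with v hv hv'
  simpa [dist_eq_norm, Prod.norm_def] using hL.dist_le_mul v hv _ hv'

theorem hasDerivAt_zero_of_isBigO_sq {φ : ℝ → ℝ} (hφ : φ =O[𝓝 0] (· ^ 2)) :
    HasDerivAt φ 0 0 := by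
  have : φ =O[𝓝 0] fun y => ‖y - 0‖ ^ 2 := by simpa using hφ
  simpa using (this.hasFDerivAt one_lt_two).hasDerivAt

theorem eq_zero_of_isLittleO_sq {φ φ' : ℝ → ℝ} {c : ℝ}
    (hφ : ∀ᶠ y in 𝓝 0, HasDerivAt φ (φ' y) y) (hφ' : HasDerivAt φ' c 0)
    (hsmall : φ =o[𝓝 0] (· ^ 2)) : c = 0 := by
  have hderiv₀ := hasDerivAt_zero_of_isBigO_sq hsmall.isBigO
  have hφ'₀ : φ' 0 = 0 := hφ.self_of_nhds.unique hderiv₀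
  have hφ₀ : φ 0 = 0 := by simpa using hsmall.isBigO.eq_zero_imp.self_of_nhds
  have hφ_lim : Tendsto φ (𝓝[≠] 0) (𝓝 0) := by
    simpa [hφ₀] using hderiv₀.continuousAt.tendsto.mono_left nhdsWithin_le_nhds
  have hne : ∀ᶠ y : ℝ in 𝓝[≠] 0, 2 * y ≠ 0 := by
    filter_upwards [self_mem_nhdsWithin] with y hy using mul_ne_zero two_ne_zero hy
  have hslope : Tendsto (fun y => φ' y / (2 * y)) (𝓝[≠] 0) (𝓝 (c / 2)) := by
    refine (hφ'.tendsto_slope.div_const 2).congr fun y => ?_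
    simp only [slope_def_field, hφ'₀, sub_zero]
    ring
  have hlim := HasDerivAt.lhopital_zero_nhdsNE (hφ.filter_mono nhdsWithin_le_nhds)
    (Eventually.of_forall fun y => by simpa using hasDerivAt_pow 2 y) hne
    hφ_lim
    ((continuous_pow 2).tendsto' 0 0 (by simp) |>.mono_left nhdsWithin_le_nhds) hslope
  have := tendsto_nhds_unique hlim
    (hsmall.tendsto_div_nhds_zero.mono_left nhdsWithin_le_nhds)
  linarith

theorem hasDerivAt_comp_mk_left {g : ℝ × P → ℝ} {y : ℝ} {q : P}
    (hg : DifferentiableAt ℝ g (y, q)) :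
    HasDerivAt (fun u => g (u, q)) (fderiv ℝ g (y, q) (1, 0)) y :=
  hg.hasFDerivAt.comp_hasDerivAt y ((hasDerivAt_id y).prodMk (hasDerivAt_const y q))

theorem eventually_fderiv_mk_zero_eq_zero {g : ℝ × P → ℝ} (hg : ContDiffAt ℝ 1 g 0)
    (hsmall : g =O[𝓝 0] fun v => v.1 ^ 2) :
    ∀ᶠ q : P in 𝓝 0, fderiv ℝ g (0, q) (1, 0) = 0 := by
  obtain ⟨B, hB⟩ := hsmall.bound
  have hax : Tendsto (fun q : P => ((0 : ℝ), q)) (𝓝 0) (𝓝 0) :=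
    (by fun_prop : Continuous fun q : P => ((0 : ℝ), q)).tendsto' _ _ rfl
  filter_upwards [hax.eventually (hg.eventually (by simp)),
    hax.eventually hB.eventually_nhds] with q hdiff hbound
  refine (hasDerivAt_comp_mk_left (hdiff.differentiableAt one_ne_zero)).unique
    (hasDerivAt_zero_of_isBigO_sq (.of_bound B ?_))
  exact (by fun_prop : Continuous fun y : ℝ => (y, q)).tendsto 0 |>.eventually hbound

theorem fderiv_fst_isLittleO {g : ℝ × P → ℝ} (hg : ContDiffAt ℝ 2 g 0)
    (hsmall : g =o[𝓝 0] fun v => v.1 ^ 2) :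
    (fun v => fderiv ℝ g v (1, 0)) =o[𝓝 0] Prod.fst := by
  set D : ℝ × P → ℝ := fun v => fderiv ℝ g v (1, 0)
  have hD_strict : HasStrictFDerivAt D (fderiv ℝ D 0) 0 :=
    ((hg.fderiv_right (m := 1) (by norm_num)).clm_apply contDiffAt_const).hasStrictFDerivAt
      one_ne_zero
  have hfst : Tendsto (fun y : ℝ => (y, (0 : P))) (𝓝 0) (𝓝 0) :=
    (by fun_prop : Continuous fun y : ℝ => (y, (0 : P))).tendsto' _ _ rfl
  have hproj : Tendsto (fun v : ℝ × P => (v, ((0 : ℝ), v.2))) (𝓝 0) (𝓝 (0, 0)) :=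
    (by fun_prop : Continuous fun v : ℝ × P => (v, ((0 : ℝ), v.2))).tendsto' _ _ rfl
  have hD_fst : fderiv ℝ D 0 (1, 0) = 0 :=
    eq_zero_of_isLittleO_sq (φ := fun y => g (y, 0))
      (hfst.eventually (hg.eventually (by simp)) |>.mono fun y hy =>
        hasDerivAt_comp_mk_left (hy.differentiableAt two_ne_zero))
      (hasDerivAt_comp_mk_left hD_strict.differentiableAt) (hsmall.comp_tendsto hfst)
  have hD_ax : ∀ᶠ v : ℝ × P in 𝓝 0, D (0, v.2) = 0 :=
    (continuous_snd.tendsto' (0 : ℝ × P) 0 rfl).eventually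
      (eventually_fderiv_mk_zero_eq_zero (hg.of_le (by norm_num)) hsmall.isBigO)
  have hincr : (fun v : ℝ × P => D v - D (0, v.2) - fderiv ℝ D 0 (v - (0, v.2)))
      =o[𝓝 0] fun v => v - (0, v.2) := hD_strict.isLittleO.comp_tendsto hproj
  refine (hincr.congr' ?_ .rfl).trans_isBigO (.of_bound 1 (.of_forall fun v => by
    simp [Prod.norm_def]))
  filter_upwards [hD_ax] with v hv
  have hv_fst : v - (0, v.2) = v.1 • ((1 : ℝ), (0 : P)) := by ext <;> simp
  rw [hv, hv_fst, map_smul, hD_fst, smul_zero, sub_zero, sub_zero]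

theorem eventually_abs_mul_sub_mul_le {g : ℝ × P → ℝ} (hg : ContDiffAt ℝ 2 g 0)
    (hsmall : g =o[𝓝 0] fun v => v.1 ^ 2) {ε : ℝ} (hε : 0 < ε) :
    ∀ᶠ v : ℝ × P in 𝓝 0, ∀ y y', |y| ≤ v.1 → |y'| ≤ v.1 →
      |y * g (y, v.2) - y' * g (y', v.2)| ≤ ε * v.1 ^ 2 * |y - y'| := by
  set k' : ℝ × P → ℝ := fun v => 1 * g v + v.1 * fderiv ℝ g v (1, 0) with hk'
  have hk'_small : k' =o[𝓝 0] fun v => v.1 ^ 2 := by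
    have hmul : (fun v => v.1 * fderiv ℝ g v (1, 0)) =o[𝓝 0] fun v : ℝ × P => v.1 * v.1 :=
      (isBigO_refl _ _).mul_isLittleO (fderiv_fst_isLittleO hg hsmall)
    simpa only [hk', one_mul] using hsmall.add (by simpa only [sq] using hmul)
  have hlocal : ∀ᶠ v : ℝ × P in 𝓝 0,
      HasDerivAt (fun u => u * g (u, v.2)) (k' v) v.1 ∧ |k' v| ≤ ε * v.1 ^ 2 := by
    filter_upwards [hg.eventually (by simp), hk'_small.def hε] with v hdiff hbound
    exact ⟨(hasDerivAt_id v.1).mul (hasDerivAt_comp_mk_left (hdiff.differentiableAt two_ne_zero)),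
      by simpa using hbound⟩
  obtain ⟨δ, hδ, hball⟩ := Metric.eventually_nhds_iff_ball.1 hlocal
  filter_upwards [Metric.ball_mem_nhds 0 hδ] with v hv y y' hy hy'
  have hslice : ∀ u ∈ Icc (-v.1) v.1, (u, v.2) ∈ Metric.ball (0 : ℝ × P) δ := by
    intro u hu
    rw [mem_ball_zero_iff, Prod.norm_def, max_lt_iff] at hv ⊢
    exact ⟨((abs_le.2 hu).trans (le_abs_self _)).trans_lt hv.1, hv.2⟩
  refine Convex.norm_image_sub_le_of_norm_hasDerivWithin_le (𝕜 := ℝ) (s := Icc (-v.1) v.1)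
    (f := fun u => u * g (u, v.2)) (f' := fun u => k' (u, v.2))
    (fun u hu => (hball _ (hslice u hu)).1.hasDerivWithinAt) (fun u hu => ?_)
    (convex_Icc _ _) (abs_le.1 hy') (abs_le.1 hy)
  refine (hball _ (hslice u hu)).2.trans ?_
  gcongr ε * ?_
  exact sq_le_sq.2 ((abs_le.2 hu).trans (le_abs_self _))

end SmallPerturbation

theorem eventually_nhds_of_forall_abs_lt {Q : ℝ × ℝ × ℝ → Prop} {ρ : ℝ} (hρ : 0 < ρ)
    (hQ : ∀ x y α : ℝ, |x| < ρ → |y| < ρ → |α| < ρ → Q (x, y, α)) :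
    ∀ᶠ v in 𝓝 (0, 0, 0), Q v := by
  filter_upwards [Metric.ball_mem_nhds _ hρ] with ⟨x, y, α⟩ hv
  simp only [Metric.mem_ball, Prod.dist_eq, max_lt_iff, Real.dist_0_eq_abs] at hv
  exact hQ x y α hv.1 hv.2.1 hv.2.2

theorem eventually_forall_trappingBox {Q : ℝ × ℝ × ℝ → Prop} (hQ : ∀ᶠ v in 𝓝 (0, 0, 0), Q v)
    (C : ℝ) : ∀ᶠ s in 𝓝 0, ∀ z ∈ trappingBox (C * s) s, Q (z.1, z.2, s ^ 2) := by
  obtain ⟨δ, hδ, hball⟩ := Metric.eventually_nhds_iff_ball.1 hQ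
  have hsize : Tendsto (fun s : ℝ => (C * s, 11 / 10 * s, s ^ 2)) (𝓝 0) (𝓝 (0, 0, 0)) :=
    (by fun_prop : Continuous fun s : ℝ => (C * s, 11 / 10 * s, s ^ 2)).tendsto' _ _ (by simp)
  filter_upwards [hsize (Metric.ball_mem_nhds _ hδ)] with s hs z hz
  apply hball
  simp only [mem_preimage, Metric.mem_ball, Prod.dist_eq, max_lt_iff, Real.dist_0_eq_abs] at hs ⊢
  exact ⟨hz.1.trans_lt ((le_abs_self _).trans_lt hs.1),
    hz.2.trans_lt ((le_abs_self _).trans_lt hs.2.1), hs.2.2⟩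

theorem exists_pos_mul_sq_le (u : ℝ) {ε : ℝ} (hε : 0 < ε) : ∃ C > 0, u * C ^ 2 ≤ ε := by
  have hlim : Tendsto (fun C : ℝ => u * C ^ 2) (𝓝[>] 0) (𝓝 0) :=
    ((by fun_prop : Continuous fun C : ℝ => u * C ^ 2).tendsto' 0 0 (by simp)).mono_left
      nhdsWithin_le_nhds
  exact ((eventually_mem_nhdsWithin (s := Ioi 0)).and (hlim.eventually_le_const hε)).exists

section NormalForm

variable {a b K : ℝ} {f₁ f₂ : ℝ × ℝ × ℝ → ℝ}

theorem eventually_abs_fstMultiplier_le (ha : 0 < a)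
    (hf₁ : ∀ᶠ v in 𝓝 (0, 0, 0), |f₁ v| ≤ K * (|v.2.1| ^ 3 + |v.1| * v.2.1 ^ 2)) :
    ∀ᶠ v in 𝓝 (0, 0, 0), |1 - a * v.2.1 ^ 2 + f₁ v| ≤ 1 - a / 2 * v.2.1 ^ 2 := by
  have hK : ∀ᶠ v : ℝ × ℝ × ℝ in 𝓝 (0, 0, 0), K * (|v.2.1| + |v.1|) < a / 2 :=
    (by fun_prop : Continuous fun v : ℝ × ℝ × ℝ => K * (|v.2.1| + |v.1|)).tendsto' _ 0 (by simp)
      |>.eventually_lt_const (by positivity)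
  have hy : ∀ᶠ v : ℝ × ℝ × ℝ in 𝓝 (0, 0, 0), a * v.2.1 ^ 2 < 1 :=
    (by fun_prop : Continuous fun v : ℝ × ℝ × ℝ => a * v.2.1 ^ 2).tendsto' _ 0 (by simp)
      |>.eventually_lt_const one_pos
  filter_upwards [hf₁, hK, hy] with v hf hK hy
  have hf_le : |f₁ v| ≤ a / 2 * v.2.1 ^ 2 :=
    calc |f₁ v| ≤ K * (|v.2.1| ^ 3 + |v.1| * v.2.1 ^ 2) := hf
      _ = K * (|v.2.1| + |v.1|) * v.2.1 ^ 2 := by rw [← sq_abs v.2.1]; ring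
      _ ≤ a / 2 * v.2.1 ^ 2 := by gcongr
  rw [abs_le] at hf_le ⊢
  constructor <;> linarith

theorem eventually_abs_sndPerturbation_le {C : ℝ} (hC : |b| * C ^ 2 ≤ 1 / 20)
    (hf₂ : ∀ᶠ v in 𝓝 (0, 0, 0), |f₂ v| ≤ K * (|v.1| ^ 3 + |v.2.1| ^ 3)) (hK : 0 ≤ K) :
    ∀ᶠ s in 𝓝[>] 0, ∀ z ∈ trappingBox (C * s) s,
      |b * z.1 ^ 2 + f₂ (z.1, z.2, s ^ 2)| ≤ s ^ 2 / 10 := by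
  have hs_small : ∀ᶠ s : ℝ in 𝓝 0, K * (C ^ 3 + (11 / 10) ^ 3) * s < 1 / 20 :=
    (by fun_prop : Continuous fun s : ℝ => K * (C ^ 3 + (11 / 10) ^ 3) * s).tendsto' _ 0 (by simp)
      |>.eventually_lt_const (by norm_num)
  filter_upwards [nhdsWithin_le_nhds (eventually_forall_trappingBox hf₂ C),
    nhdsWithin_le_nhds hs_small] with s hf hs z hz
  have hquad : |b * z.1 ^ 2| ≤ 1 / 20 * s ^ 2 :=
    calc |b * z.1 ^ 2| = |b| * |z.1| ^ 2 := by rw [abs_mul, abs_pow]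
      _ ≤ |b| * (C * s) ^ 2 := by gcongr; exact hz.1
      _ = |b| * C ^ 2 * s ^ 2 := by ring
      _ ≤ 1 / 20 * s ^ 2 := by gcongr
  have hcubic : |f₂ (z.1, z.2, s ^ 2)| ≤ 1 / 20 * s ^ 2 :=
    calc |f₂ (z.1, z.2, s ^ 2)| ≤ K * (|z.1| ^ 3 + |z.2| ^ 3) := hf z hz
      _ ≤ K * ((C * s) ^ 3 + (11 / 10 * s) ^ 3) := by
        gcongr
        exacts [hz.1, hz.2]
      _ = K * (C ^ 3 + (11 / 10) ^ 3) * s * s ^ 2 := by ring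
      _ ≤ 1 / 20 * s ^ 2 := by gcongr
  linarith [abs_add_le (b * z.1 ^ 2) (f₂ (z.1, z.2, s ^ 2))]

theorem exists_eventually_abs_sndPerturbation_sub_le (hf₂ : ContDiffAt ℝ 1 f₂ (0, 0, 0)) (b C : ℝ) :
    ∃ Λ : ℝ, ∀ᶠ s in 𝓝[>] 0, ∀ z ∈ trappingBox (C * s) s,
      |(b * z.1 ^ 2 + f₂ (z.1, z.2, s ^ 2)) - (b * 0 ^ 2 + f₂ (0, z.2, s ^ 2))| ≤ Λ * |z.1| := by
  have hsmooth : ContDiffAt ℝ 1 (fun v : ℝ × ℝ × ℝ => b * v.1 ^ 2 + f₂ v) (0, 0, 0) := by fun_prop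
  obtain ⟨Λ, hΛ⟩ := exists_eventually_norm_sub_le_of_contDiffAt hsmooth
  refine ⟨Λ, nhdsWithin_le_nhds ?_⟩
  filter_upwards [eventually_forall_trappingBox hΛ C] with s hs z hz
  simpa using hs z hz

theorem eventually_abs_mul_sndPerturbation_sub_le (hf₂ : ContDiffAt ℝ 2 f₂ (0, 0, 0))
    (hbound : ∀ᶠ v in 𝓝 (0, 0, 0), |f₂ v| ≤ K * (|v.1| ^ 3 + |v.2.1| ^ 3)) :
    ∀ᶠ s in 𝓝 0, ∀ y y', |y| ≤ 11 / 10 * s → |y'| ≤ 11 / 10 * s →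
      |y * f₂ (0, y, s ^ 2) - y' * f₂ (0, y', s ^ 2)| ≤ 2 / 5 * s ^ 2 * |y - y'| := by
  have hax : Tendsto (fun v : ℝ × ℝ => ((0 : ℝ), v)) (𝓝 0) (𝓝 (0, 0, 0)) :=
    (by fun_prop : Continuous fun v : ℝ × ℝ => ((0 : ℝ), v)).tendsto' _ _ rfl
  have hsmooth : ContDiffAt ℝ 2 (fun v : ℝ × ℝ => f₂ (0, v)) 0 :=
    hf₂.comp (0 : ℝ × ℝ) (contDiffAt_const.prodMk contDiffAt_id)
  have hcubic : (fun v : ℝ × ℝ => f₂ (0, v)) =O[𝓝 0] fun v => v.1 ^ 3 :=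
    .of_bound K ((hax.eventually hbound).mono fun v hv => by simpa using hv)
  have hsmall : (fun v : ℝ × ℝ => f₂ (0, v)) =o[𝓝 0] fun v => v.1 ^ 2 :=
    hcubic.trans_isLittleO ((isLittleO_pow_pow (by norm_num : 2 < 3)).comp_tendsto
      (continuous_fst.tendsto' (0 : ℝ × ℝ) 0 rfl))
  have hscale : Tendsto (fun s : ℝ => (11 / 10 * s, s ^ 2)) (𝓝 0) (𝓝 0) :=
    (by fun_prop : Continuous fun s : ℝ => (11 / 10 * s, s ^ 2)).tendsto' _ _ (by simp)
  filter_upwards [hscale.eventually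
    (eventually_abs_mul_sub_mul_le hsmooth hsmall (by norm_num : (0 : ℝ) < 1 / 4))]
    with s hs y y' hy hy'
  refine (hs y y' hy hy').trans ?_
  refine mul_le_mul_of_nonneg_right ?_ (abs_nonneg _)
  linarith [sq_nonneg s, show (11 / 10 * s) ^ 2 = 121 / 100 * s ^ 2 by ring]

theorem eventually_abs_sndPerturbation_axis_le
    (hbound : ∀ᶠ v in 𝓝 (0, 0, 0), |f₂ v| ≤ K * (|v.1| ^ 3 + |v.2.1| ^ 3)) :
    ∀ᶠ s in 𝓝[>] 0, ∀ y, |y| = s → |f₂ (0, y, s ^ 2)| ≤ K * s ^ 3 := by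
  filter_upwards [self_mem_nhdsWithin,
    nhdsWithin_le_nhds (eventually_forall_trappingBox hbound 0)] with s hs hf y hy
  have hs : 0 < s := hs
  simpa [hy] using hf (0, y) ⟨by simp, by simp only [hy]; linarith⟩

theorem exists_eventually_isNearFlip (ha : 0 < a) (hf₂ : ContDiffAt ℝ 2 f₂ (0, 0, 0)) (hK : 0 ≤ K)
    (hbound₁ : ∀ᶠ v in 𝓝 (0, 0, 0), |f₁ v| ≤ K * (|v.2.1| ^ 3 + |v.1| * v.2.1 ^ 2))
    (hbound₂ : ∀ᶠ v in 𝓝 (0, 0, 0), |f₂ v| ≤ K * (|v.1| ^ 3 + |v.2.1| ^ 3))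
    {C : ℝ} (hC₀ : 0 ≤ C) (hC : |b| * C ^ 2 ≤ 1 / 20) :
    ∃ Λ, ∀ᶠ s in 𝓝[>] 0, IsNearFlip s (a / 2) (C * s) Λ
      (fun z => 1 - a * z.2 ^ 2 + f₁ (z.1, z.2, s ^ 2))
      (fun z => b * z.1 ^ 2 + f₂ (z.1, z.2, s ^ 2)) := by
  obtain ⟨Λ, hΛ⟩ := exists_eventually_abs_sndPerturbation_sub_le (hf₂.of_le (by norm_num)) b C
  refine ⟨Λ, ?_⟩
  filter_upwards [self_mem_nhdsWithin, Ioc_mem_nhdsGT (by norm_num : (0 : ℝ) < 1 / 10), hΛ,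
    nhdsWithin_le_nhds
      (eventually_forall_trappingBox (eventually_abs_fstMultiplier_le ha hbound₁) C),
    eventually_abs_sndPerturbation_le hC hbound₂ hK,
    nhdsWithin_le_nhds (eventually_abs_mul_sndPerturbation_sub_le hf₂ hbound₂)]
    with s hs₀ hs hΛ hp hw hlip
  exact
    { scale_pos := hs₀
      scale_le := hs.2
      rate_pos := half_pos ha
      width_nonneg := mul_nonneg hC₀ (le_of_lt hs₀)
      abs_p_le := hp
      abs_w_le := hw
      abs_w_sub_le := hΛ
      abs_mul_w_sub_le := by simpa using hlip }

end NormalForm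

theorem stmt_1_general
    (a b : ℝ) (ha : 0 < a)
    (f₁ f₂ : ℝ × ℝ × ℝ → ℝ) (hf₂ : ContDiffAt ℝ 2 f₂ (0, 0, 0))
    (K : ℝ) (hK : 0 < K)
    (hbound : ∃ ρ : ℝ, 0 < ρ ∧ ∀ x y α : ℝ, |x| < ρ → |y| < ρ → |α| < ρ →
      |f₁ (x, y, α)| ≤ K * (|y| ^ 3 + |x| * y ^ 2) ∧
      |f₂ (x, y, α)| ≤ K * (|x| ^ 3 + |y| ^ 3))
    (F : ℝ → ℝ × ℝ → ℝ × ℝ)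
    (hF : ∀ α x y : ℝ,
      F α (x, y) = ((1 - a * y ^ 2 + f₁ (x, y, α)) * x,
                    -(1 + α + b * x ^ 2 - y ^ 2 + f₂ (x, y, α)) * y)) :
    ∃ ᾱ C₀ C₁ C₂ C₃ : ℝ, 0 < ᾱ ∧ 0 < C₀ ∧ 0 < C₁ ∧ 0 < C₂ ∧ 0 < C₃ ∧
      ∀ α : ℝ, 0 < α → α ≤ ᾱ →
        ∃ ξp ξm : ℝ, 0 < ξp ∧ ξm < 0 ∧
          F α (0, ξp) = (0, ξm) ∧ F α (0, ξm) = (0, ξp) ∧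
          |ξp - Real.sqrt α| ≤ C₀ * α ∧ |ξm + Real.sqrt α| ≤ C₀ * α ∧
          ∀ x₀ y₀ : ℝ, 0 < |y₀| → |y₀| ≤ C₁ * Real.sqrt α → |x₀| ≤ C₂ * Real.sqrt α →
            ∃ C₄ : ℝ, 0 < C₄ ∧ ∀ t : ℕ,
              min (Real.sqrt (((F α)^[t] (x₀, y₀)).1 ^ 2 + (((F α)^[t] (x₀, y₀)).2 - ξp) ^ 2))
                  (Real.sqrt (((F α)^[t] (x₀, y₀)).1 ^ 2 + (((F α)^[t] (x₀, y₀)).2 - ξm) ^ 2))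
                ≤ C₄ * (1 - C₃ * α) ^ t := by
  obtain ⟨ρ, hρ, hbound⟩ := hbound
  have hbound : ∀ᶠ v in 𝓝 (0, 0, 0), |f₁ v| ≤ K * (|v.2.1| ^ 3 + |v.1| * v.2.1 ^ 2) ∧
      |f₂ v| ≤ K * (|v.1| ^ 3 + |v.2.1| ^ 3) := eventually_nhds_of_forall_abs_lt hρ hbound
  have hbound₂ := hbound.mono fun _ => And.right
  obtain ⟨C, hC₀, hC⟩ := exists_pos_mul_sq_le |b| (by norm_num : (0 : ℝ) < 1 / 20)
  obtain ⟨Λ, hnear⟩ := exists_eventually_isNearFlip ha hf₂ hK.le (hbound.mono fun _ => And.left)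
    hbound₂ hC₀.le hC
  obtain ⟨σ, hσ, hgood⟩ := (nhdsGT_basis_Ioc (0 : ℝ)).eventually_iff.1
    (hnear.and (eventually_abs_sndPerturbation_axis_le hbound₂))
  refine ⟨σ ^ 2, K, 1, C, min (1 / 2) (a / 2 / 2), by positivity, hK, one_pos, hC₀, by positivity,
    fun α hα hασ => ?_⟩
  obtain ⟨s, hs, rfl⟩ : ∃ s > 0, s ^ 2 = α := ⟨√α, Real.sqrt_pos.2 hα, Real.sq_sqrt hα.le⟩
  obtain ⟨h, hw⟩ := hgood ⟨hs, (pow_le_pow_iff_left₀ hs.le hσ.le two_ne_zero).1 hασ⟩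
  have hF_eq : F (s ^ 2) = flipMap s (fun z => 1 - a * z.2 ^ 2 + f₁ (z.1, z.2, s ^ 2))
      (fun z => b * z.1 ^ 2 + f₂ (z.1, z.2, s ^ 2)) := by
    ext ⟨x, y⟩ <;> simp only [hF, flipMap]
    ring
  obtain ⟨ξp, ξm, hξ⟩ := h.exists_isAxisTwoCycle
  obtain ⟨hξp, hξm⟩ := h.abs_axisTwoCycle_sub_le hξ (by simpa using hw)
  rw [hF_eq, Real.sqrt_sq hs.le, one_mul]
  exact ⟨ξp, ξm, hξ.upper_pos, hξ.lower_neg, hξ.map_upper, hξ.map_lower, hξp, hξm,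
    fun x₀ y₀ hy₀ hy hx => h.exists_min_sqrt_iterate_le (z := (x₀, y₀)) hξ
      ⟨hx, hy.trans (by linarith)⟩ (abs_pos.1 hy₀)⟩

/-- Supercritical regime: convergence to a stable period-two orbit.
For small `α > 0` the map `F^{(α)}(x,y) = ((1-ay²+f₁)x, -(1+α+bx²-y²+f₂)y)` admits a
period-two orbit `{(0,ξ₊),(0,ξ₋)}` with `ξ± = ±√α + O(α)`, and iterates from suitable
initial points converge to this orbit at a linear rate. -/
theorem stmt_1
    (a b : ℝ) (ha : 0 < a) (hb : 0 < b)
    (f₁ f₂ : ℝ × ℝ × ℝ → ℝ)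
    (hf₁ : AnalyticAt ℝ f₁ (0, 0, 0)) (hf₂ : AnalyticAt ℝ f₂ (0, 0, 0))
    (K : ℝ) (hK : 0 < K)
    (hbound : ∃ ρ : ℝ, 0 < ρ ∧ ∀ x y α : ℝ, |x| < ρ → |y| < ρ → |α| < ρ →
      |f₁ (x, y, α)| ≤ K * (|y| ^ 3 + |x| * y ^ 2) ∧
      |f₂ (x, y, α)| ≤ K * (|x| ^ 3 + |y| ^ 3))
    (F : ℝ → ℝ × ℝ → ℝ × ℝ)
    (hF : ∀ α x y : ℝ,
      F α (x, y) = ((1 - a * y ^ 2 + f₁ (x, y, α)) * x,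
                    -(1 + α + b * x ^ 2 - y ^ 2 + f₂ (x, y, α)) * y)) :
    ∃ ᾱ C₀ C₁ C₂ C₃ : ℝ, 0 < ᾱ ∧ 0 < C₀ ∧ 0 < C₁ ∧ 0 < C₂ ∧ 0 < C₃ ∧
      ∀ α : ℝ, 0 < α → α ≤ ᾱ →
        ∃ ξp ξm : ℝ, 0 < ξp ∧ ξm < 0 ∧
          F α (0, ξp) = (0, ξm) ∧ F α (0, ξm) = (0, ξp) ∧
          |ξp - Real.sqrt α| ≤ C₀ * α ∧ |ξm + Real.sqrt α| ≤ C₀ * α ∧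
          ∀ x₀ y₀ : ℝ, 0 < |y₀| → |y₀| ≤ C₁ * Real.sqrt α → |x₀| ≤ C₂ * Real.sqrt α →
            ∃ C₄ : ℝ, 0 < C₄ ∧ ∀ t : ℕ,
              min (Real.sqrt (((F α)^[t] (x₀, y₀)).1 ^ 2 + (((F α)^[t] (x₀, y₀)).2 - ξp) ^ 2))
                  (Real.sqrt (((F α)^[t] (x₀, y₀)).1 ^ 2 + (((F α)^[t] (x₀, y₀)).2 - ξm) ^ 2))
                ≤ C₄ * (1 - C₃ * α) ^ t :=
  stmt_1_general a b ha f₁ f₂ hf₂.contDiffAt K hK hbound F hF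
end

section
/- Let m₁, m₂ be natural numbers with m₁ + m₂ = p, let U ⊆ ℝ^{m₁} × ℝ^{m₂} be open, and let g : U → ℝ^p be a C³ map that is injective on U and whose derivative Dg(x,y) is invertible at every (x,y) ∈ U, and suppose that the pure second and third derivatives of g in the second variable vanish identically on U: D²g(x,y)[(0,w₁),(0,w₂)] = 0 and D³g(x,y)[(0,w₁),(0,w₂),(0,w₃)] = 0 for all (x,y) ∈ U and all w₁, w₂, w₃ ∈ ℝ^{m₂}. Let g⁻¹ : g(U) → U denote the inverse. Then for every (x,y) ∈ U there exist δ > 0 and C > 0 such that for all v ∈ ℝ^p with ‖v‖ < δ, writing z := g(x,y) and (v_x, v_y) := Dg(x,y)⁻¹[v] ∈ ℝ^{m₁} × ℝ^{m₂}: z + v ∈ g(U) and ‖g⁻¹(z + v) − g⁻¹(z) − Dg⁻¹(z)[v] − (1/2)D²g⁻¹(z)[v,v]‖ ≤ C(‖v_x‖³ + ‖v_x‖²‖v_y‖ + ‖v_x‖‖v_y‖²). -/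
/-!
Near `g z`, the second-order Taylor remainder `R` of a `C³` local inverse `h` of `g` satisfies
`‖R u - R u'‖ ≤ K max(‖u‖, ‖u'‖)² ‖u - u'‖`, because the derivative of `R` is a first-order Taylor
remainder of `Dh`. It vanishes at `u' = Dg(z)(0, w)` for small `w`: there
`g (z + (0, w)) = g z + u'` since `g` is affine in the second variable, and
`D²h(g z)[Dg(z) v, Dg(z) v] = -Dh(g z)[D²g(z)[v, v]]` is zero at `v = (0, w)`. Comparing
`u = Dg(z)(vx, vy)` with `u' = Dg(z)(0, vy)` gains the factor `‖vx‖`.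
-/

open Asymptotics Filter Set Topology

section TaylorRemainder

variable {E F : Type*} [NormedAddCommGroup E] [NormedSpace ℝ E]
  [NormedAddCommGroup F] [NormedSpace ℝ F] {f : E → F}

theorem isBigO_sub_of_hasFDerivAt_of_isBigO_pow {f' : E → E →L[ℝ] F} {a : E} {n : ℕ}
    (hf : ∀ᶠ x in 𝓝 a, HasFDerivAt f (f' x) x) (hf' : f' =O[𝓝 a] fun x ↦ ‖x - a‖ ^ n) :
    (fun p : E × E ↦ f p.1 - f p.2) =O[𝓝 (a, a)]
      fun p ↦ ‖p - (a, a)‖ ^ n * ‖p.1 - p.2‖ := by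
  obtain ⟨C, hC, hbound⟩ := hf'.exists_pos
  obtain ⟨ρ, hρ, hball⟩ := Metric.eventually_nhds_iff_ball.1 (hf.and hbound.bound)
  refine .of_bound C ?_
  filter_upwards [Metric.ball_mem_nhds (a, a) hρ] with p hp
  set r := ‖p - (a, a)‖ with hr
  have hsub : Metric.closedBall a r ⊆ Metric.ball a ρ :=
    Metric.closedBall_subset_ball (by simpa [dist_eq_norm] using hp)
  have hfst_mem : p.1 ∈ Metric.closedBall a r := by
    simpa [dist_eq_norm] using norm_fst_le (p - (a, a))
  have hsnd_mem : p.2 ∈ Metric.closedBall a r := by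
    simpa [dist_eq_norm] using norm_snd_le (p - (a, a))
  have hderiv_le : ∀ x ∈ Metric.closedBall a r, ‖f' x‖ ≤ C * r ^ n := fun x hx ↦ by
    refine (hball x (hsub hx)).2.trans ?_
    rw [norm_pow, norm_norm]
    gcongr
    simpa [dist_eq_norm] using hx
  have := (convex_closedBall a r).norm_image_sub_le_of_norm_hasFDerivWithin_le (𝕜 := ℝ)
    (fun x hx ↦ (hball x (hsub hx)).1.hasFDerivWithinAt) hderiv_le hsnd_mem hfst_mem
  simpa [abs_of_nonneg, ← mul_assoc, hr] using this

theorem isBigO_add_sub_sub_fderiv {a : E} (hf : ContDiffAt ℝ 2 f a) :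
    (fun u ↦ f (a + u) - f a - fderiv ℝ f a u) =O[𝓝 0] fun u ↦ ‖u‖ ^ 2 := by
  have htendsto : Tendsto (fun u ↦ a + u) (𝓝 0) (𝓝 a) :=
    (continuous_const_add a).tendsto' 0 a (add_zero a)
  have hderiv : ∀ᶠ u in 𝓝 0, HasFDerivAt (fun u ↦ f (a + u) - f a - fderiv ℝ f a u)
      (fderiv ℝ f (a + u) - fderiv ℝ f a) u := by
    filter_upwards [htendsto.eventually (hf.eventually (by simp))] with u hu
    exact (((hasFDerivAt_comp_add_left a).2
      (hu.differentiableAt two_ne_zero).hasFDerivAt).sub_const _).sub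
      (fderiv ℝ f a).hasFDerivAt
  have hderiv_isBigO : (fun u ↦ fderiv ℝ f (a + u) - fderiv ℝ f a) =O[𝓝 0]
      fun u ↦ ‖u - 0‖ ^ 1 := by
    have hdiff : DifferentiableAt ℝ (fderiv ℝ f) a :=
      (hf.fderiv_right (m := 1) le_rfl).differentiableAt one_ne_zero
    simpa [Function.comp_def] using hdiff.isBigO_sub.norm_right.comp_tendsto htendsto
  have hdiag : Tendsto (fun u : E ↦ (u, (0 : E))) (𝓝 0) (𝓝 (0, 0)) :=
    (Continuous.prodMk_left 0).tendsto 0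
  simpa [Function.comp_def, sq, Prod.norm_def] using
    (isBigO_sub_of_hasFDerivAt_of_isBigO_pow hderiv hderiv_isBigO).comp_tendsto hdiag

/-- The remainder of the second-order Taylor expansion of `f` at `a`, as a function of the
displacement `u` from `a`. -/
noncomputable def taylorRemainderTwo (f : E → F) (a u : E) : F :=
  f (a + u) - f a - fderiv ℝ f a u - (1 / 2 : ℝ) • iteratedFDeriv ℝ 2 f a ![u, u]

theorem hasFDerivAt_taylorRemainderTwo {a u : E} (hf : ContDiffAt ℝ 2 f a)
    (hfu : DifferentiableAt ℝ f (a + u)) :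
    HasFDerivAt (taylorRemainderTwo f a)
      (fderiv ℝ f (a + u) - fderiv ℝ f a - fderiv ℝ (fderiv ℝ f) a u) u := by
  have hsymm : IsSymmSndFDerivAt ℝ f a := hf.isSymmSndFDerivAt (by simp)
  have hquad : HasFDerivAt (fun u ↦ (1 / 2 : ℝ) • iteratedFDeriv ℝ 2 f a ![u, u])
      (fderiv ℝ (fderiv ℝ f) a u) u := by
    simp only [iteratedFDeriv_two_apply]
    refine (((fderiv ℝ (fderiv ℝ f) a).hasFDerivAt.clm_apply
      (hasFDerivAt_id u)).const_smul (1 / 2 : ℝ)).congr_fderiv ?_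
    ext k
    have : fderiv ℝ (fderiv ℝ f) a k u = fderiv ℝ (fderiv ℝ f) a u k := hsymm.eq k u
    simp [this, ← two_smul ℝ]
  exact ((((hasFDerivAt_comp_add_left a).2 hfu.hasFDerivAt).sub_const _).sub
    (fderiv ℝ f a).hasFDerivAt).sub hquad

theorem isBigO_taylorRemainderTwo_sub {a : E} (hf : ContDiffAt ℝ 3 f a) :
    (fun p : E × E ↦ taylorRemainderTwo f a p.1 - taylorRemainderTwo f a p.2) =O[𝓝 0]
      fun p ↦ ‖p‖ ^ 2 * ‖p.1 - p.2‖ := by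
  have hderiv : ∀ᶠ u in 𝓝 0, HasFDerivAt (taylorRemainderTwo f a)
      (fderiv ℝ f (a + u) - fderiv ℝ f a - fderiv ℝ (fderiv ℝ f) a u) u := by
    have htendsto : Tendsto (fun u ↦ a + u) (𝓝 0) (𝓝 a) :=
      (continuous_const_add a).tendsto' 0 a (add_zero a)
    filter_upwards [htendsto.eventually (hf.eventually (by simp))] with u hu
    exact hasFDerivAt_taylorRemainderTwo (hf.of_le (by norm_num))
      (hu.differentiableAt three_ne_zero)
  simpa [← Prod.zero_eq_mk] using isBigO_sub_of_hasFDerivAt_of_isBigO_pow (n := 2) hderiv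
    (by simpa using isBigO_add_sub_sub_fderiv (hf.fderiv_right (m := 2) (by norm_num)))

end TaylorRemainder

theorem contDiffAt_of_eventually_leftInverse {𝕜 E F : Type*} [RCLike 𝕜]
    [NormedAddCommGroup E] [NormedSpace 𝕜 E] [CompleteSpace E]
    [NormedAddCommGroup F] [NormedSpace 𝕜 F] {g : E → F} {h : F → E} {z : E}
    {A : E ≃L[𝕜] F} {n : WithTop ℕ∞}
    (hg : ContDiffAt 𝕜 n g z) (hA : HasFDerivAt g (A : E →L[𝕜] F) z) (hn : n ≠ 0)
    (hhg : ∀ᶠ y in 𝓝 z, h (g y) = y) : ContDiffAt 𝕜 n h (g z) :=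
  (hg.to_localInverse hA hn).congr_of_eventuallyEq
    ((hg.hasStrictFDerivAt' hA hn).localInverse_unique hhg)

theorem eventually_add_mem_image {𝕜 E F : Type*} [NontriviallyNormedField 𝕜]
    [NormedAddCommGroup E] [NormedSpace 𝕜 E] [CompleteSpace E]
    [NormedAddCommGroup F] [NormedSpace 𝕜 F] {g : E → F} {z : E} {A : E ≃L[𝕜] F} {s : Set E}
    (hA : HasStrictFDerivAt g (A : E →L[𝕜] F) z) (hs : s ∈ 𝓝 z) :
    ∀ᶠ v in 𝓝 0, g z + v ∈ g '' s := by
  refine ((continuous_const_add (g z)).tendsto' 0 _ (add_zero _)).eventually_mem ?_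
  rw [← hA.map_nhds_eq_of_equiv]
  exact image_mem_map hs

section DerivLeftInverse

variable {𝕜 E F : Type*} [NontriviallyNormedField 𝕜] [NormedAddCommGroup E] [NormedSpace 𝕜 E]
  [NormedAddCommGroup F] [NormedSpace 𝕜 F] {g : E → F} {h : F → E} {z : E}

theorem fderiv_comp_fderiv_of_eventually_leftInverse (hh : DifferentiableAt 𝕜 h (g z))
    (hg : DifferentiableAt 𝕜 g z) (hhg : ∀ᶠ y in 𝓝 z, h (g y) = y) :
    fderiv 𝕜 h (g z) ∘L fderiv 𝕜 g z = .id 𝕜 E :=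
  ((hh.hasFDerivAt.comp z hg.hasFDerivAt).congr_of_eventuallyEq
    (hhg.mono fun _ hy ↦ hy.symm)).unique (hasFDerivAt_id z)

theorem iteratedFDeriv_two_of_eventually_leftInverse (hh : ContDiffAt 𝕜 2 h (g z))
    (hg : ContDiffAt 𝕜 2 g z) (hhg : ∀ᶠ y in 𝓝 z, h (g y) = y) (v w : E) :
    iteratedFDeriv 𝕜 2 h (g z) ![fderiv 𝕜 g z v, fderiv 𝕜 g z w] =
      -fderiv 𝕜 h (g z) (iteratedFDeriv 𝕜 2 g z ![v, w]) := by
  have hconst : ∀ᶠ y in 𝓝 z, fderiv 𝕜 h (g y) (fderiv 𝕜 g y w) = w := by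
    filter_upwards [hg.continuousAt.eventually (hh.eventually (by simp)),
      hg.eventually (by simp), hhg.eventually_nhds] with y hhy hgy hhgy
    exact DFunLike.congr_fun (fderiv_comp_fderiv_of_eventually_leftInverse
      (hhy.differentiableAt two_ne_zero) (hgy.differentiableAt two_ne_zero) hhgy) w
  have hDh : HasFDerivAt (fderiv 𝕜 h) (fderiv 𝕜 (fderiv 𝕜 h) (g z)) (g z) :=
    ((hh.fderiv_right (m := 1) le_rfl).differentiableAt one_ne_zero).hasFDerivAt
  have hDg : HasFDerivAt (fderiv 𝕜 g) (fderiv 𝕜 (fderiv 𝕜 g) z) z :=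
    ((hg.fderiv_right (m := 1) le_rfl).differentiableAt one_ne_zero).hasFDerivAt
  have hderiv := (hDh.comp z (hg.differentiableAt two_ne_zero).hasFDerivAt).clm_apply
    (hDg.clm_apply (hasFDerivAt_const w z))
  have hzero := hderiv.unique ((hasFDerivAt_const w z).congr_of_eventuallyEq hconst)
  rw [iteratedFDeriv_two_apply, iteratedFDeriv_two_apply, eq_neg_iff_add_eq_zero, add_comm]
  simpa using DFunLike.congr_fun hzero v

end DerivLeftInverse

section TaylorRemainderLeftInverse

variable {E F : Type*} [NormedAddCommGroup E] [NormedSpace ℝ E]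
  [NormedAddCommGroup F] [NormedSpace ℝ F] {g : E → F} {h : F → E} {z : E}

theorem eventually_forall_Icc_add_smul {p : E → Prop} (hp : ∀ᶠ y in 𝓝 z, p y) :
    ∀ᶠ v in 𝓝 (0 : E), ∀ t ∈ Icc (0 : ℝ) 1, p (z + t • v) := by
  refine isCompact_Icc.eventually_forall_of_forall_eventually fun t _ ↦ ?_
  have hcont : Continuous fun q : E × ℝ ↦ z + q.2 • q.1 := by fun_prop
  exact (hcont.tendsto' (0, t) z (by simp)).eventually hp

variable [CompleteSpace F]

theorem map_add_eq_add_fderiv_of_iteratedFDeriv_two_eq_zero {v : E}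
    (hg : ∀ t ∈ Icc (0 : ℝ) 1, ContDiffAt ℝ 2 g (z + t • v))
    (h2 : ∀ t ∈ Icc (0 : ℝ) 1, iteratedFDeriv ℝ 2 g (z + t • v) ![v, v] = 0) :
    g (z + v) = g z + fderiv ℝ g z v := by
  have hint : ∫ t in (0 : ℝ)..1, (1 - t) • iteratedFDeriv ℝ 2 g (z + t • v) (fun _ ↦ v) = 0 := by
    refine intervalIntegral.integral_zero_ae (.of_forall fun t ht ↦ ?_)
    rw [uIoc_of_le zero_le_one] at ht
    have := h2 t (Ioc_subset_Icc_self ht)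
    rw [iteratedFDeriv_two_apply] at this ⊢
    simpa using Or.inr this
  have := map_add_eq_sum_add_integral_iteratedFDeriv (n := 1) hg
  simpa [Finset.sum_range_succ, hint] using this

variable {P : E →L[ℝ] E}

theorem eventually_map_add_eq_add_fderiv (hg : ContDiffAt ℝ 2 g z)
    (h2 : ∀ᶠ y in 𝓝 z, ∀ w, iteratedFDeriv ℝ 2 g y ![P w, P w] = 0) :
    ∀ᶠ w in 𝓝 0, g (z + P w) = g z + fderiv ℝ g z (P w) := by
  have hP : Tendsto P (𝓝 0) (𝓝 0) := P.continuous.tendsto' 0 0 (map_zero P)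
  filter_upwards [hP.eventually (eventually_forall_Icc_add_smul (hg.eventually (by simp))),
    hP.eventually (eventually_forall_Icc_add_smul h2)] with w hgw h2w
  exact map_add_eq_add_fderiv_of_iteratedFDeriv_two_eq_zero hgw fun t ht ↦ h2w t ht w

theorem eventually_taylorRemainderTwo_leftInverse_eq_zero (hg : ContDiffAt ℝ 2 g z)
    (hh : ContDiffAt ℝ 2 h (g z)) (hhg : ∀ᶠ y in 𝓝 z, h (g y) = y)
    (h2 : ∀ᶠ y in 𝓝 z, ∀ w, iteratedFDeriv ℝ 2 g y ![P w, P w] = 0) :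
    ∀ᶠ w in 𝓝 0, taylorRemainderTwo h (g z) (fderiv ℝ g z (P w)) = 0 := by
  have htendsto : Tendsto (fun w ↦ z + P w) (𝓝 0) (𝓝 z) :=
    (by fun_prop : Continuous fun w ↦ z + P w).tendsto' 0 z (by simp)
  filter_upwards [eventually_map_add_eq_add_fderiv hg h2, htendsto.eventually hhg] with w hgw hhw
  have hfst : fderiv ℝ h (g z) (fderiv ℝ g z (P w)) = P w :=
    DFunLike.congr_fun (fderiv_comp_fderiv_of_eventually_leftInverse
      (hh.differentiableAt two_ne_zero) (hg.differentiableAt two_ne_zero) hhg) (P w)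
  have hsnd : iteratedFDeriv ℝ 2 h (g z) ![fderiv ℝ g z (P w), fderiv ℝ g z (P w)] = 0 := by
    rw [iteratedFDeriv_two_of_eventually_leftInverse hh hg hhg, h2.self_of_nhds, map_zero, neg_zero]
  rw [taylorRemainderTwo, ← hgw, hhw, hhg.self_of_nhds, hfst, hsnd]
  simp

theorem isBigO_taylorRemainderTwo_leftInverse (hg : ContDiffAt ℝ 2 g z)
    (hh : ContDiffAt ℝ 3 h (g z)) (hhg : ∀ᶠ y in 𝓝 z, h (g y) = y)
    (h2 : ∀ᶠ y in 𝓝 z, ∀ w, iteratedFDeriv ℝ 2 g y ![P w, P w] = 0) :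
    (fun w ↦ taylorRemainderTwo h (g z) (fderiv ℝ g z w)) =O[𝓝 0]
      fun w ↦ ‖w‖ ^ 2 * ‖w - P w‖ := by
  set A := fderiv ℝ g z
  let Φ : E →L[ℝ] F × F := A.prod (A ∘L P)
  have hΦ : Tendsto Φ (𝓝 0) (𝓝 0) := Φ.continuous.tendsto' 0 0 (map_zero Φ)
  have hzero : ∀ᶠ w in 𝓝 0, taylorRemainderTwo h (g z) (A (P w)) = 0 :=
    eventually_taylorRemainderTwo_leftInverse_eq_zero hg (hh.of_le (by norm_num)) hhg h2
  calc (fun w ↦ taylorRemainderTwo h (g z) (A w))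
      =ᶠ[𝓝 0] fun w ↦ taylorRemainderTwo h (g z) (A w) - taylorRemainderTwo h (g z) (A (P w)) := by
        filter_upwards [hzero] with w hw
        rw [hw, sub_zero]
    _ =O[𝓝 0] fun w ↦ ‖Φ w‖ ^ 2 * ‖A w - A (P w)‖ :=
        (isBigO_taylorRemainderTwo_sub hh).comp_tendsto hΦ
    _ =O[𝓝 0] fun w ↦ ‖w‖ ^ 2 * ‖w - P w‖ := by
        simp only [← map_sub]
        exact ((Φ.isBigO_id _).norm_norm.pow 2).mul (A.isBigO_comp _ _).norm_norm

end TaylorRemainderLeftInverse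

theorem norm_mk_sq_mul_norm_fst_le {E F : Type*} [SeminormedAddCommGroup E]
    [SeminormedAddCommGroup F] (x : E) (y : F) :
    ‖(x, y)‖ ^ 2 * ‖x‖ ≤ ‖x‖ ^ 3 + ‖x‖ ^ 2 * ‖y‖ + ‖x‖ * ‖y‖ ^ 2 := by
  have hsq : ‖(x, y)‖ ^ 2 ≤ ‖x‖ ^ 2 + ‖x‖ * ‖y‖ + ‖y‖ ^ 2 := by
    rcases max_choice ‖x‖ ‖y‖ with hmax | hmax <;> rw [Prod.norm_mk, hmax] <;>
      nlinarith [norm_nonneg x, norm_nonneg y, mul_nonneg (norm_nonneg x) (norm_nonneg y)]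
  calc ‖(x, y)‖ ^ 2 * ‖x‖ ≤ (‖x‖ ^ 2 + ‖x‖ * ‖y‖ + ‖y‖ ^ 2) * ‖x‖ := by gcongr
    _ = ‖x‖ ^ 3 + ‖x‖ ^ 2 * ‖y‖ + ‖x‖ * ‖y‖ ^ 2 := by ring

theorem stmt_9_general {E₁ E₂ F : Type*}
    [NormedAddCommGroup E₁] [NormedSpace ℝ E₁] [CompleteSpace E₁]
    [NormedAddCommGroup E₂] [NormedSpace ℝ E₂] [CompleteSpace E₂]
    [NormedAddCommGroup F] [NormedSpace ℝ F] [CompleteSpace F]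
    {U : Set (E₁ × E₂)} {z₀ : E₁ × E₂} (hU : U ∈ 𝓝 z₀)
    {g : E₁ × E₂ → F} (hg : ContDiffAt ℝ 3 g z₀) (hderiv : Function.Bijective (fderiv ℝ g z₀))
    (h2 : ∀ z ∈ U, ∀ w : E₂, iteratedFDeriv ℝ 2 g z ![((0 : E₁), w), ((0 : E₁), w)] = 0)
    {ginv : F → E₁ × E₂} (hginv : ∀ z ∈ U, ginv (g z) = z) :
    ∃ δ C : ℝ, 0 < δ ∧ 0 < C ∧
      ∀ v : F, ‖v‖ < δ → ∀ (vx : E₁) (vy : E₂), fderiv ℝ g z₀ (vx, vy) = v →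
        (g z₀ + v) ∈ g '' U ∧
        ‖ginv (g z₀ + v) - ginv (g z₀) - fderiv ℝ ginv (g z₀) v -
            (1 / 2 : ℝ) • iteratedFDeriv ℝ 2 ginv (g z₀) ![v, v]‖
          ≤ C * (‖vx‖ ^ 3 + ‖vx‖ ^ 2 * ‖vy‖ + ‖vx‖ * ‖vy‖ ^ 2) := by
  let A : (E₁ × E₂) ≃L[ℝ] F := .ofBijective (fderiv ℝ g z₀) (LinearMap.ker_eq_bot.2 hderiv.1)
    (LinearMap.range_eq_top.2 hderiv.2)
  have hA : HasFDerivAt g (A : E₁ × E₂ →L[ℝ] F) z₀ :=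
    (hg.differentiableAt three_ne_zero).hasFDerivAt
  have hginv' : ∀ᶠ z in 𝓝 z₀, ginv (g z) = z := eventually_of_mem hU hginv
  let P : E₁ × E₂ →L[ℝ] E₁ × E₂ := .inr ℝ E₁ E₂ ∘L .snd ℝ E₁ E₂
  have hginvC3 : ContDiffAt ℝ 3 ginv (g z₀) :=
    contDiffAt_of_eventually_leftInverse hg hA three_ne_zero hginv'
  obtain ⟨C, hC, hbound⟩ := (isBigO_taylorRemainderTwo_leftInverse (P := P)
    (hg.of_le (by norm_num)) hginvC3 hginv'
    (eventually_of_mem hU fun z hz w ↦ h2 z hz w.2)).exists_pos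
  have himage : ∀ᶠ v in 𝓝 0, g z₀ + v ∈ g '' U :=
    eventually_add_mem_image (hg.hasStrictFDerivAt' hA three_ne_zero) hU
  obtain ⟨δ, hδ, hball⟩ := Metric.eventually_nhds_iff.1
    (himage.and ((A.symm.continuous.tendsto' 0 0 (map_zero _)).eventually hbound.bound))
  refine ⟨δ, C, hδ, hC, ?_⟩
  rintro _ hv vx vy rfl
  obtain ⟨hmem, hle⟩ := hball (by simpa using hv)
  have hsymm : A.symm (fderiv ℝ g z₀ (vx, vy)) = (vx, vy) := A.symm_apply_apply (vx, vy)
  refine ⟨hmem, ?_⟩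
  calc ‖taylorRemainderTwo ginv (g z₀) (fderiv ℝ g z₀ (vx, vy))‖
      ≤ C * (‖(vx, vy)‖ ^ 2 * ‖vx‖) := by simpa [hsymm, P, abs_of_nonneg] using hle
    _ ≤ C * (‖vx‖ ^ 3 + ‖vx‖ ^ 2 * ‖vy‖ + ‖vx‖ * ‖vy‖ ^ 2) := by
        gcongr
        exact norm_mk_sq_mul_norm_fst_le vx vy

/-- Sharpened second-order Taylor expansion of an inverse map.
If `g : U ⊆ ℝ^{m₁} × ℝ^{m₂} → ℝᵖ` is an injective `C³` map with invertible derivative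
whose pure second and third derivatives in the second variable vanish on `U`, then the
second-order Taylor remainder of `g⁻¹` at `z = g(x,y)` is
`O(‖v_x‖³ + ‖v_x‖²‖v_y‖ + ‖v_x‖‖v_y‖²)`, where `(v_x, v_y) = Dg(x,y)⁻¹[v]`. -/
theorem stmt_9
    (m₁ m₂ p : ℕ) (hmp : m₁ + m₂ = p)
    (U : Set (EuclideanSpace ℝ (Fin m₁) × EuclideanSpace ℝ (Fin m₂)))
    (hU : IsOpen U)
    (g : EuclideanSpace ℝ (Fin m₁) × EuclideanSpace ℝ (Fin m₂) → EuclideanSpace ℝ (Fin p))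
    (hg : ContDiffOn ℝ 3 g U)
    (hinj : Set.InjOn g U)
    (hderiv : ∀ z ∈ U, Function.Bijective (fderiv ℝ g z))
    (h2 : ∀ z ∈ U, ∀ w₁ w₂ : EuclideanSpace ℝ (Fin m₂),
      iteratedFDeriv ℝ 2 g z ![((0 : EuclideanSpace ℝ (Fin m₁)), w₁),
        ((0 : EuclideanSpace ℝ (Fin m₁)), w₂)] = 0)
    (h3 : ∀ z ∈ U, ∀ w₁ w₂ w₃ : EuclideanSpace ℝ (Fin m₂),
      iteratedFDeriv ℝ 3 g z ![((0 : EuclideanSpace ℝ (Fin m₁)), w₁),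
        ((0 : EuclideanSpace ℝ (Fin m₁)), w₂), ((0 : EuclideanSpace ℝ (Fin m₁)), w₃)] = 0)
    (ginv : EuclideanSpace ℝ (Fin p) → EuclideanSpace ℝ (Fin m₁) × EuclideanSpace ℝ (Fin m₂))
    (hginv : ∀ z ∈ U, ginv (g z) = z) :
    ∀ z₀ ∈ U, ∃ δ C : ℝ, 0 < δ ∧ 0 < C ∧
      ∀ v : EuclideanSpace ℝ (Fin p), ‖v‖ < δ →
        ∀ (vx : EuclideanSpace ℝ (Fin m₁)) (vy : EuclideanSpace ℝ (Fin m₂)),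
          fderiv ℝ g z₀ (vx, vy) = v →
          (g z₀ + v) ∈ g '' U ∧
          ‖ginv (g z₀ + v) - ginv (g z₀) - fderiv ℝ ginv (g z₀) v -
              (1 / 2 : ℝ) • iteratedFDeriv ℝ 2 ginv (g z₀) ![v, v]‖
            ≤ C * (‖vx‖ ^ 3 + ‖vx‖ ^ 2 * ‖vy‖ + ‖vx‖ * ‖vy‖ ^ 2) := by
  exact fun z₀ hz₀ ↦ stmt_9_general (hU.mem_nhds hz₀) (hg.contDiffAt (hU.mem_nhds hz₀))
    (hderiv z₀ hz₀) (fun z hz w ↦ h2 z hz w w) hginv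
end
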